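/- arXiv:1509.05905 — 2 statements merged into one kernel-verified Lean document; each statement's English description precedes it below -/
import Mathlib

section
/- Let W ⊆ ℝ^n be a nonempty open set and let f : W → ℝ be arc-rational. Then f is continuous on W and arc-analytic: for every real-analytic map η : (−1,1) → ℝ^n with η((−1,1)) ⊆ W, the composition f ∘ η is real-analytic on (−1,1). (Theorem 1.11 for open subsets of ℝ^n.) -/
open MvPolynomial

/-- The set of real points of the subvariety of affine `n`-space defined by an ideal `I`
of the real polynomial ring. -/
def realPoints {n : ℕ} (I : Ideal (MvPolynomial (Fin n) ℝ)) : Set (Fin n → ℝ) :=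
  {x | ∀ P ∈ I, eval x P = 0}

/-- `f : W → ℝ` is arc-rational: for every `x ∈ W` and every irreducible real algebraic
curve through `x` (encoded by a prime ideal `I` with one-dimensional quotient and
`x ∈ Z(I)`), there is an open neighborhood `U_x` of `x` in `W` such that the restriction
of `f` to `U_x ∩ Z(I)` is continuous and rational on the curve. -/
def ArcRational {n : ℕ} (W : Set (Fin n → ℝ)) (f : (Fin n → ℝ) → ℝ) : Prop :=
  ∀ x ∈ W, ∀ I : Ideal (MvPolynomial (Fin n) ℝ), I.IsPrime →
    ringKrullDim (MvPolynomial (Fin n) ℝ ⧸ I) = 1 → x ∈ realPoints I →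
    ∃ Ux : Set (Fin n → ℝ), IsOpen Ux ∧ x ∈ Ux ∧ Ux ⊆ W ∧
      ContinuousOn f (Ux ∩ realPoints I) ∧
      ∃ p q : MvPolynomial (Fin n) ℝ, q ∉ I ∧
        ∀ y ∈ Ux ∩ realPoints I, eval y q ≠ 0 → f y = eval y p / eval y q

lemma alg_of_trdeg_le_one {A : Type} [CommRing A] [IsDomain A] [Algebra ℝ A]
    (htr : Algebra.trdeg ℝ A ≤ 1) (P : Ideal A) [P.IsPrime] (hP : P ≠ ⊥) : P.IsMaximal := by
  obtain ⟨a, haP, ha⟩ := Submodule.exists_mem_ne_zero_of_ne_bot hP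
  have key : ∀ b : A, IsAlgebraic ℝ (Ideal.Quotient.mk P b) := by
    intro b
    have hdep : ¬ AlgebraicIndependent ℝ ![a, b] := by
      intro h
      have h1 := h.lift_cardinalMk_le_trdeg
      have h2 := h1.trans (Cardinal.lift_le.mpr htr)
      simp at h2
    rw [algebraicIndependent_iff_injective_aeval, injective_iff_map_eq_zero] at hdep
    push Not at hdep
    obtain ⟨F, hF0, hF⟩ := hdep
    let ψ : Polynomial (MvPolynomial (Fin 1) ℝ) →ₐ[ℝ] A :=
      (aeval ![a, b]).comp (finSuccEquiv ℝ 1).symm.toAlgHom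
    have hψX : ψ Polynomial.X = a := by
      have : (finSuccEquiv ℝ 1).symm Polynomial.X = X 0 := by
        rw [AlgEquiv.symm_apply_eq, finSuccEquiv_X_zero]
      simp [ψ, this]
    have hψC : ∀ c, ψ (Polynomial.C c) = aeval (fun _ : Fin 1 => b) c := by
      intro c
      have h1 : ψ.comp ((Polynomial.CAlgHom (R := ℝ) (A := MvPolynomial (Fin 1) ℝ))) =
          aeval (fun _ : Fin 1 => b) := by
        apply MvPolynomial.algHom_ext
        intro i
        have : (finSuccEquiv ℝ 1).symm (Polynomial.C (X i)) = X i.succ := by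
          rw [AlgEquiv.symm_apply_eq, finSuccEquiv_X_succ]
        simp [ψ, this]

      exact DFunLike.congr_fun h1 c
    have hG : ∃ G : Polynomial (MvPolynomial (Fin 1) ℝ), G ≠ 0 ∧ ψ G = 0 := by
      refine ⟨finSuccEquiv ℝ 1 F, by simpa using hF, by simpa [ψ] using hF0⟩
    obtain ⟨G, hG, hψG⟩ := hG
    obtain ⟨k, G', hG', hGe⟩ := Polynomial.exists_eq_pow_rootMultiplicity_mul_and_not_dvd G hG 0 |>.imp
      (fun g hg => hg) |> fun ⟨g, h1, h2⟩ => (⟨_, g, h2, h1⟩ : ∃ k g', ¬ _ ∣ g' ∧ G = _ ^ k * g')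
    rw [map_zero, sub_zero] at hG' hGe
    have h0 : ψ G' = 0 := by
      have := hψG
      rw [hGe, map_mul, map_pow, hψX] at this
      exact (mul_eq_zero.mp this).resolve_left (pow_ne_zero _ ha)
    rw [Polynomial.X_dvd_iff] at hG'
    have h3 : aeval (fun _ : Fin 1 => b) (G'.coeff 0) ∈ P := by
      rw [← hψC]
      have h4 := Polynomial.divX_mul_X_add G'
      have h5 : ψ (G'.divX * Polynomial.X + Polynomial.C (G'.coeff 0)) = 0 := by rw [h4, h0]
      rw [map_add, map_mul, hψX] at h5
      rw [eq_neg_of_add_eq_zero_right h5]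
      exact P.neg_mem (P.mul_mem_left _ haP)
    by_contra hcon
    have hcon' : AlgebraicIndependent ℝ (fun _ : Fin 1 => Ideal.Quotient.mk P b) := by
      rw [algebraicIndependent_unique_type_iff]; exact hcon
    rw [algebraicIndependent_iff] at hcon'
    apply hG'
    apply hcon'
    have := (Ideal.Quotient.eq_zero_iff_mem).mpr h3
    rw [← Ideal.Quotient.mkₐ_eq_mk ℝ, MvPolynomial.comp_aeval_apply] at this
    exact this
  have : Algebra.IsAlgebraic ℝ (A ⧸ P) := ⟨fun x => by
    obtain ⟨b, rfl⟩ := Ideal.Quotient.mk_surjective x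
    exact key b⟩
  apply Ideal.Quotient.maximal_of_isField
  exact isField_of_isIntegral_of_isField' (R := ℝ) (Field.toIsField ℝ)

lemma dim_one {n : ℕ} (I : Ideal (MvPolynomial (Fin n) ℝ)) [hI : I.IsPrime] (x y : Fin n → ℝ)
    (hx : x ∈ realPoints I) (hy : y ∈ realPoints I) (hxy : x ≠ y)
    (htr : Algebra.trdeg ℝ (MvPolynomial (Fin n) ℝ ⧸ I) ≤ 1) :
    ringKrullDim (MvPolynomial (Fin n) ℝ ⧸ I) = 1 := by
  apply eq_of_le_of_not_lt
  · rw [← Nat.cast_one, ← Ring.krullDimLE_iff]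
    apply Ring.KrullDimLE.mk₁'
    intro P hP hPp
    exact alg_of_trdeg_le_one htr P hP
  · intro h'
    have h'' : ringKrullDim (MvPolynomial (Fin n) ℝ ⧸ I) ≤ 0 := Order.le_of_lt_succ h'
    rw [← Nat.cast_zero, ← Ring.krullDimLE_iff] at h''
    have hf : IsField (MvPolynomial (Fin n) ℝ ⧸ I) := Ring.KrullDimLE.isField_of_isDomain
    have hmax : I.IsMaximal := Ideal.Quotient.maximal_of_isField _ hf
    obtain ⟨i, hi⟩ := Function.ne_iff.mp hxy
    have h1 : I = RingHom.ker (eval x) := hmax.eq_of_le (RingHom.ker_ne_top _) (fun P hP => hx P hP)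
    have h2 : (X i - C (x i) : MvPolynomial (Fin n) ℝ) ∈ I := by
      rw [h1, RingHom.mem_ker]; simp
    have := hy _ h2
    simp at this
    exact hi (by linarith)

open Filter Topology

lemma poly_eventually_ne (q : Polynomial ℝ) (hq : q ≠ 0) (t : ℝ) :
    ∀ᶠ s in 𝓝[≠] t, q.eval s ≠ 0 := by
  have h : (q.roots.toFinset : Set ℝ).Finite := Finset.finite_toSet _
  have h2 : ((q.roots.toFinset : Set ℝ) \ {t})ᶜ ∈ 𝓝 t := by
    apply (h.subset Set.sdiff_subset).isClosed.isOpen_compl.mem_nhds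
    simp
  rw [eventually_nhdsWithin_iff]
  filter_upwards [h2] with s hs hne h0
  apply hs
  refine ⟨?_, hne⟩
  simp [hq, h0]

lemma eq_of_punctured {u v : ℝ → ℝ} {t : ℝ} (hu : ContinuousAt u t) (hv : ContinuousAt v t)
    (h : ∀ᶠ s in 𝓝[≠] t, u s = v s) : u t = v t := by
  have h1 : Tendsto u (𝓝[≠] t) (𝓝 (u t)) := hu.tendsto.mono_left nhdsWithin_le_nhds
  have h2 : Tendsto v (𝓝[≠] t) (𝓝 (v t)) := hv.tendsto.mono_left nhdsWithin_le_nhds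
  exact tendsto_nhds_unique_of_eventuallyEq h1 h2 h

lemma eval_arc {n : ℕ} (γ : Fin n → Polynomial ℝ) (t : ℝ) (P : MvPolynomial (Fin n) ℝ) :
    (aeval γ P).eval t = eval (fun i => (γ i).eval t) P := by
  have h : (Polynomial.evalRingHom t).comp (aeval γ : MvPolynomial (Fin n) ℝ →ₐ[ℝ] _).toRingHom =
      eval (fun i => (γ i).eval t) := by
    apply MvPolynomial.ringHom_ext
    · intro r; simp
    · intro i; simp
  exact DFunLike.congr_fun h P

lemma poly_arc {n : ℕ} {W : Set (Fin n → ℝ)} {f : (Fin n → ℝ) → ℝ} (hf : ArcRational W f)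
    (γ : Fin n → Polynomial ℝ) (t₀ : ℝ) (h : (fun i => (γ i).eval t₀) ∈ W) :
    ContinuousAt (fun t => f (fun i => (γ i).eval t)) t₀ ∧
    ∃ p q : Polynomial ℝ, q ≠ 0 ∧
      ∀ᶠ t in 𝓝 t₀, q.eval t * f (fun i => (γ i).eval t) = p.eval t := by
  by_cases hc : ∀ t, (fun i => (γ i).eval t) = (fun i => (γ i).eval t₀)
  · refine ⟨?_, Polynomial.C (f (fun i => (γ i).eval t₀)), 1, one_ne_zero, ?_⟩
    · simp only [hc]; exact continuousAt_const
    · simp only [hc]; simp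
  push Not at hc
  obtain ⟨t₁, ht₁⟩ := hc
  let φ : MvPolynomial (Fin n) ℝ →ₐ[ℝ] Polynomial ℝ := aeval γ
  let I : Ideal (MvPolynomial (Fin n) ℝ) := RingHom.ker φ
  have hI : I.IsPrime := RingHom.ker_isPrime _
  have hmem : ∀ t, (fun i => (γ i).eval t) ∈ realPoints I := by
    intro t P hP
    have : φ P = 0 := hP
    rw [← eval_arc]
    change (φ P).eval t = 0
    rw [this]; simp
  have htr : Algebra.trdeg ℝ (MvPolynomial (Fin n) ℝ ⧸ I) ≤ 1 := by
    rw [← Polynomial.trdeg_of_isDomain (R := ℝ)]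
    exact trdeg_le_of_injective (Ideal.kerLiftAlg φ) (Ideal.kerLiftAlg_injective φ)
  obtain ⟨U, hUo, hxU, hUW, hcont, P, Q, hQ, hPQ⟩ :=
    hf _ h I hI (dim_one I _ _ (hmem t₁) (hmem t₀) ht₁ htr) (hmem t₀)
  have hγc : Continuous (fun t => (fun i => (γ i).eval t) : ℝ → Fin n → ℝ) :=
    continuous_pi fun i => (γ i).continuous
  have hU' : ∀ᶠ t in 𝓝 t₀, (fun i => (γ i).eval t) ∈ U :=
    hγc.continuousAt.eventually (hUo.mem_nhds hxU)
  have hca : ContinuousAt (fun t => f (fun i => (γ i).eval t)) t₀ := by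
    have h1 : ContinuousWithinAt f (U ∩ realPoints I) (fun i => (γ i).eval t₀) :=
      hcont _ ⟨hxU, hmem t₀⟩
    have h2 : Tendsto (fun t => (fun i => (γ i).eval t) : ℝ → Fin n → ℝ) (𝓝 t₀)
        (𝓝[U ∩ realPoints I] (fun i => (γ i).eval t₀)) := by
      apply tendsto_nhdsWithin_of_tendsto_nhds_of_eventually_within _ hγc.continuousAt
      filter_upwards [hU'] with t ht using ⟨ht, hmem t⟩
    exact h1.tendsto.comp h2
  refine ⟨hca, φ P, φ Q, hQ, ?_⟩
  have hp : ∀ᶠ t in 𝓝[≠] t₀, (φ Q).eval t * f (fun i => (γ i).eval t) = (φ P).eval t := by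
    filter_upwards [poly_eventually_ne (φ Q) hQ t₀, hU'.filter_mono nhdsWithin_le_nhds] with t h1 h2
    have h3 := hPQ _ ⟨h2, hmem t⟩
    rw [← eval_arc, ← eval_arc] at h3
    have h4 := h3 h1
    rw [h4]

    exact mul_div_cancel₀ _ h1
  have h0 := eq_of_punctured ((φ Q).continuous.continuousAt.mul hca) (φ P).continuous.continuousAt hp
  rw [eventually_nhdsWithin_iff] at hp
  filter_upwards [hp] with t ht
  by_cases htt : t = t₀
  · subst htt; exact h0
  · exact ht htt

lemma seg_rat (u : ℝ → ℝ) (J : Set ℝ) (hJc : IsPreconnected J)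
    (h : ∀ t₀ ∈ J, ContinuousAt u t₀ ∧ ∃ p q : Polynomial ℝ, q ≠ 0 ∧
      ∀ᶠ t in 𝓝 t₀, q.eval t * u t = p.eval t) :
    ∃ p q : Polynomial ℝ, q ≠ 0 ∧ ∀ t ∈ J, q.eval t * u t = p.eval t := by
  rcases J.eq_empty_or_nonempty with rfl | ⟨t₀, ht₀⟩
  · exact ⟨0, 1, one_ne_zero, by simp⟩
  obtain ⟨-, p, q, hq, hpq⟩ := h t₀ ht₀
  refine ⟨p, q, hq, ?_⟩
  let S : Set ℝ := {t | ∀ᶠ s in 𝓝 t, q.eval s * u s = p.eval s}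
  have hS : IsOpen S := isOpen_setOfPred_eventually_nhds
  have hsub : J ⊆ S := by
    apply hJc.subset_of_closure_inter_subset hS ⟨t₀, ht₀, hpq⟩
    rintro t₁ ⟨hcl, ht₁⟩
    obtain ⟨hc1, p1, q1, hq1, hpq1⟩ := h t₁ ht₁
    obtain ⟨O, hO, hOo, htO⟩ := eventually_nhds_iff.mp hpq1
    obtain ⟨s, hsO, hsS⟩ := mem_closure_iff.mp hcl O hOo htO
    have hid : q * p1 = q1 * p := by
      apply Polynomial.eq_of_infinite_eval_eq
      have : {x | (q * p1).eval x = (q1 * p).eval x} ∈ 𝓝 s := by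
        filter_upwards [hsS, hOo.mem_nhds hsO] with x hx1 hx2
        simp only [Polynomial.eval_mul]
        rw [← hx1, ← hO x hx2]; ring
      exact infinite_of_mem_nhds s this
    have h2 : ∀ᶠ x in 𝓝[≠] t₁, q.eval x * u x = p.eval x := by
      filter_upwards [poly_eventually_ne q1 hq1 t₁, hpq1.filter_mono nhdsWithin_le_nhds]
        with x hx1 hx2
      apply mul_left_cancel₀ hx1
      have := congrArg (Polynomial.eval x) hid
      simp only [Polynomial.eval_mul] at this
      rw [← this, ← hx2]; ring
    have h0 := eq_of_punctured (q.continuous.continuousAt.mul hc1) p.continuous.continuousAt h2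
    rw [eventually_nhdsWithin_iff] at h2
    change ∀ᶠ s in 𝓝 t₁, q.eval s * u s = p.eval s
    filter_upwards [h2] with t ht
    by_cases htt : t = t₁
    · subst htt; exact h0
    · exact ht htt
  intro t ht
  exact (hsub ht).self_of_nhds

lemma lin_alg {Ω ι : Type} [Fintype ι] [DecidableEq ι] (r : Ω → ι → Polynomial ℝ) (Y : Set ℝ)
    (hY : Y.Infinite)
    (h : ∀ t ∈ Y, ∃ c : ι → ℝ, c ≠ 0 ∧ ∀ w, ∑ i, (r w i).eval t * c i = 0) :
    ∃ c : ι → Polynomial ℝ, c ≠ 0 ∧ ∀ w, ∑ i, r w i * c i = 0 := by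
  let K := FractionRing (Polynomial ℝ)
  let R : Ω → ι → K := fun w i => algebraMap _ K (r w i)
  by_cases hV : Submodule.span K (Set.range R) = ⊤
  · exfalso
    obtain ⟨b, hb, hbs, hbl⟩ := exists_linearIndependent K (Set.range R)
    let B : Module.Basis b K (ι → K) := Module.Basis.mk hbl (by
      rw [Subtype.range_coe, hbs, hV])
    let e : ι ≃ b := (Pi.basisFun K ι).indexEquiv B
    choose g hg using fun x : b => hb x.2
    let M : Matrix ι ι (Polynomial ℝ) := Matrix.of fun i j => r (g (e i)) j
    have hrow : LinearIndependent K (M.map (algebraMap _ K)).row := by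
      have h1 : (M.map (algebraMap _ K)).row = (fun x : b => (x : ι → K)) ∘ e := by
        funext i j
        have := congrFun (hg (e i)) j
        simpa [M, R] using this
      rw [h1]
      exact hbl.comp _ e.injective
    have hunit : IsUnit (M.map (algebraMap _ K)) := Matrix.linearIndependent_rows_iff_isUnit.mp hrow
    have hdet : M.det ≠ 0 := by
      intro h0
      rw [Matrix.isUnit_iff_isUnit_det] at hunit
      have : (M.map (algebraMap _ K)).det = algebraMap _ K M.det := by
        rw [RingHom.map_det]; rfl
      rw [this, h0, map_zero] at hunit
      exact not_isUnit_zero hunit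
    apply hdet
    apply Polynomial.eq_zero_of_infinite_isRoot
    apply hY.mono
    intro t ht
    obtain ⟨c, hc, hcs⟩ := h t ht
    have : (M.map (Polynomial.evalRingHom t)).det = 0 := by
      rw [← Matrix.exists_mulVec_eq_zero_iff]
      refine ⟨c, hc, ?_⟩
      funext i
      exact hcs (g (e i))
    change M.det.eval t = 0
    have h2 : (M.map (Polynomial.evalRingHom t)).det = Polynomial.evalRingHom t M.det := by
      rw [RingHom.map_det]; rfl
    rw [h2] at this
    exact this
  · obtain ⟨φ, hφ, hφk⟩ := Submodule.exists_le_ker_of_lt_top _ (lt_top_iff_ne_top.mpr hV)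
    let c : ι → K := fun i => φ (Pi.single i 1)
    have hφc : ∀ v, φ v = ∑ i, v i * c i := by
      intro v
      conv_lhs => rw [pi_eq_sum_univ' v]
      simp [c, map_sum]
    obtain ⟨d, hd⟩ := IsLocalization.exist_integer_multiples_of_finite (nonZeroDivisors (Polynomial ℝ)) c
    choose c' hc' using hd
    have hd0 : algebraMap (Polynomial ℝ) K (d : Polynomial ℝ) ≠ 0 := by
      simp
    refine ⟨c', ?_, ?_⟩
    · rintro rfl
      apply hφ
      apply LinearMap.ext
      intro v
      rw [hφc]
      apply Finset.sum_eq_zero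
      intro i _
      have := hc' i
      simp only [Pi.zero_apply, map_zero, Algebra.smul_def] at this
      rw [(mul_eq_zero.mp this.symm).resolve_left hd0, mul_zero]
    · intro w
      apply IsFractionRing.injective (Polynomial ℝ) K
      have h1 : φ (R w) = 0 := hφk (Submodule.subset_span ⟨w, rfl⟩)
      rw [hφc] at h1
      rw [map_sum, map_zero]
      have : ∀ i, algebraMap (Polynomial ℝ) K (r w i * c' i) =
          algebraMap (Polynomial ℝ) K d * (R w i * c i) := by
        intro i
        rw [map_mul, hc' i, Algebra.smul_def]; ring
      simp only [this]
      rw [← Finset.mul_sum, h1, mul_zero]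

noncomputable def bigPoly {n : ℕ} (S : Finset (Fin n →₀ ℕ)) (c : S → Polynomial ℝ) :
    MvPolynomial (Fin (n + 1)) ℝ :=
  ∑ m : S, Polynomial.aeval (X 0 : MvPolynomial (Fin (n+1)) ℝ) (c m) *
    rename Fin.succ (monomial (m : Fin n →₀ ℕ) (1 : ℝ))

lemma eval_bigPoly {n : ℕ} (S : Finset (Fin n →₀ ℕ)) (c : S → Polynomial ℝ) (t : ℝ)
    (w : Fin n → ℝ) : eval (Fin.cons t w : Fin (n+1) → ℝ) (bigPoly S c) =
      ∑ m : S, (c m).eval t * eval w (monomial (m : Fin n →₀ ℕ) (1 : ℝ)) := by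
  unfold bigPoly
  rw [map_sum]
  apply Finset.sum_congr rfl
  intro m _
  rw [map_mul, eval_rename]
  congr 1
  have h : (eval (Fin.cons t w : Fin (n+1) → ℝ)).comp
      (Polynomial.aeval (X 0 : MvPolynomial (Fin (n+1)) ℝ)).toRingHom = Polynomial.evalRingHom t := by
    apply Polynomial.ringHom_ext
    · intro a; simp
    · simp
  exact DFunLike.congr_fun h (c m)

lemma bigPoly_eq_zero {n : ℕ} (S : Finset (Fin n →₀ ℕ)) (c : S → Polynomial ℝ)
    (h : bigPoly S c = 0) : c = 0 := by
  funext m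
  apply Polynomial.funext
  intro t
  have h1 : (∑ m : S, monomial (m : Fin n →₀ ℕ) ((c m).eval t)) = 0 := by
    apply MvPolynomial.funext
    intro w
    have := eval_bigPoly S c t w
    rw [h, map_zero] at this
    rw [map_sum, map_zero, this]
    apply Finset.sum_congr rfl
    intro m _
    simp [eval_monomial]
  have h2 := congrArg (coeff (m : Fin n →₀ ℕ)) h1
  rw [coeff_sum, coeff_zero, Finset.sum_eq_single m] at h2
  · simpa using h2
  · intro b _ hb
    rw [coeff_monomial, if_neg]
    intro h; exact hb (Subtype.ext h)
  · simp

lemma eval_of_support {n : ℕ} (S : Finset (Fin n →₀ ℕ)) (p : MvPolynomial (Fin n) ℝ)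
    (hp : p.support ⊆ S) (w : Fin n → ℝ) :
    eval w p = ∑ m : S, eval w (monomial (m : Fin n →₀ ℕ) (1 : ℝ)) * coeff (m : Fin n →₀ ℕ) p := by
  rw [eval_eq, Finset.sum_coe_sort S (fun m => eval w (monomial m (1 : ℝ)) * coeff m p)]
  rw [Finset.sum_subset hp]
  · apply Finset.sum_congr rfl
    intro m _
    rw [eval_monomial, one_mul, mul_comm]
    congr 1
  · intro m _ hm
    rw [notMem_support_iff.mp hm, zero_mul]

lemma sep_rat (n : ℕ) : ∀ (J : Fin n → Set ℝ) (_ : ∀ i, IsOpen (J i)) (_ : ∀ i, (J i).Nonempty)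
    (F : (Fin n → ℝ) → ℝ)
    (_ : ∀ z, (∀ i, z i ∈ J i) → ∀ i,
      (∃ p q : Polynomial ℝ, q ≠ 0 ∧ ∀ s ∈ J i, q.eval s * F (Function.update z i s) = p.eval s) ∧
      ContinuousOn (fun s => F (Function.update z i s)) (J i)),
    ∃ p q : MvPolynomial (Fin n) ℝ, q ≠ 0 ∧ ∀ z, (∀ i, z i ∈ J i) → eval z q * F z = eval z p := by
  induction n with
  | zero =>
    intro J _ _ F _
    refine ⟨C (F 0), 1, one_ne_zero, fun z _ => ?_⟩
    rw [Subsingleton.elim z 0]; simp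
  | succ n ih =>
    intro J hJo hJne F hF
    have hcons : ∀ t w, t ∈ J 0 → (∀ i : Fin n, w i ∈ J i.succ) →
        ∀ i, (Fin.cons t w : Fin (n+1) → ℝ) i ∈ J i := by
      intro t w ht hw i
      refine Fin.cases ?_ ?_ i
      · simpa using ht
      · intro i; simpa using hw i
    have h1 : ∀ t : J 0, ∃ p q : MvPolynomial (Fin n) ℝ, q ≠ 0 ∧
        ∀ w, (∀ i, w i ∈ J i.succ) → eval w q * F (Fin.cons t.1 w) = eval w p := by
      intro t
      apply ih (fun i => J i.succ) (fun i => hJo _) (fun i => hJne _) (fun w => F (Fin.cons t.1 w))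
      intro w hw i
      have := hF (Fin.cons t.1 w) (hcons _ _ t.2 hw) i.succ
      simpa only [← Fin.cons_update] using this
    choose pt qt hqt hpqt using h1
    let Ω := {w : Fin n → ℝ // ∀ i, w i ∈ J i.succ}
    obtain ⟨t₀, ht₀⟩ := hJne 0
    have h2 : ∀ w : Ω, (∃ p q : Polynomial ℝ, q ≠ 0 ∧ ∀ s ∈ J 0, q.eval s * F (Fin.cons s w.1) = p.eval s)
        ∧ ContinuousOn (fun s => F (Fin.cons s w.1)) (J 0) := by
      intro w
      have := hF (Fin.cons t₀ w.1) (hcons _ _ ht₀ w.2) 0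
      simpa only [Fin.update_cons_zero] using this
    choose pw qw hqw hpqw using fun w => (h2 w).1
    have hfib : ∃ S : Finset (Fin n →₀ ℕ),
        (Subtype.val '' {t : J 0 | (pt t).support ∪ (qt t).support = S}).Infinite := by
      by_contra hcon
      push Not at hcon
      have hc : (J 0).Countable := by
        have : J 0 ⊆ ⋃ S : Finset (Fin n →₀ ℕ),
            (Subtype.val '' {t : J 0 | (pt t).support ∪ (qt t).support = S}) := by
          intro t ht
          rw [Set.mem_iUnion]
          exact ⟨_, ⟨t, ht⟩, rfl, rfl⟩
        refine Set.Countable.mono this (Set.countable_iUnion fun S => ?_)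
        have := hcon S
        exact this.countable
      have hd : Dense (J 0)ᶜ := hc.dense_compl ℝ
      obtain ⟨x, hx1, hx2⟩ := hd.inter_open_nonempty _ (hJo 0) (hJne 0)
      exact hx2 hx1
    obtain ⟨S, hS⟩ := hfib
    let r : Ω → S ⊕ S → Polynomial ℝ := fun w => Sum.elim
      (fun m => qw w * Polynomial.C (eval w.1 (monomial (m : Fin n →₀ ℕ) (1 : ℝ))))
      (fun m => pw w * Polynomial.C (eval w.1 (monomial (m : Fin n →₀ ℕ) (1 : ℝ))))
    obtain ⟨c, hc0, hc⟩ := lin_alg r _ hS (by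
      rintro _ ⟨t, ht, rfl⟩
      have ht' : (pt t).support ∪ (qt t).support = S := ht
      refine ⟨Sum.elim (fun m => - coeff (m : Fin n →₀ ℕ) (pt t)) (fun m => coeff (m : Fin n →₀ ℕ) (qt t)), ?_, ?_⟩
      · intro h0
        apply hqt t
        apply MvPolynomial.ext
        intro m
        by_cases hm : m ∈ S
        · simpa using congrFun h0 (Sum.inr ⟨m, hm⟩)
        · rw [coeff_zero]
          rw [← notMem_support_iff]
          intro h; exact hm (ht' ▸ Finset.mem_union_right _ h)
      · intro w
        have hp := eval_of_support S (pt t) (ht' ▸ Finset.subset_union_left) w.1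
        have hq := eval_of_support S (qt t) (ht' ▸ Finset.subset_union_right) w.1
        have e1 := hpqt t w.1 w.2
        have e2 := hpqw w t.1 t.2
        rw [Fintype.sum_sum_type]
        simp only [r, Sum.elim_inl, Sum.elim_inr, Polynomial.eval_mul, Polynomial.eval_C]
        have e3 : (qw w).eval t.1 * eval w.1 (pt t) = (pw w).eval t.1 * eval w.1 (qt t) := by
          rw [← e1, ← e2]; ring
        rw [hp, hq, Finset.mul_sum, Finset.mul_sum] at e3
        simp only [mul_neg, Finset.sum_neg_distrib, mul_assoc]
        rw [e3]; ring)
    let P := bigPoly S (fun m => - c (Sum.inl m))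
    let Q := bigPoly S (fun m => c (Sum.inr m))
    have hfin : ∀ z : Fin (n+1) → ℝ, (∀ i, z i ∈ J i) → eval z Q * F z = eval z P := by
      intro z hz
      obtain ⟨t, w, rfl⟩ : ∃ t w, z = Fin.cons t w := ⟨z 0, Fin.tail z, (Fin.cons_self_tail z).symm⟩
      have hw : ∀ i : Fin n, w i ∈ J i.succ := fun i => by simpa using hz i.succ
      have ht : t ∈ J 0 := by simpa using hz 0
      let w' : Ω := ⟨w, hw⟩
      have hcw := hc w'
      have hJn : J 0 ∈ 𝓝 t := (hJo 0).mem_nhds ht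
      have hu : ContinuousAt (fun s => F (Fin.cons s w)) t :=
        ((h2 w').2 t ht).continuousAt hJn
      have hQc : Continuous (fun s => eval (Fin.cons s w : Fin (n+1) → ℝ) Q) := by
        simp only [Q, eval_bigPoly]; fun_prop
      have hPc : Continuous (fun s => eval (Fin.cons s w : Fin (n+1) → ℝ) P) := by
        simp only [P, eval_bigPoly]; fun_prop
      refine eq_of_punctured (u := fun s => eval (Fin.cons s w : Fin (n+1) → ℝ) Q * F (Fin.cons s w))
        (v := fun s => eval (Fin.cons s w : Fin (n+1) → ℝ) P)
        (hQc.continuousAt.mul hu) hPc.continuousAt ?_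
      filter_upwards [poly_eventually_ne (qw w') (hqw w') t, nhdsWithin_le_nhds hJn] with s hs hsJ
      apply mul_left_cancel₀ hs
      have e2 := hpqw w' s hsJ
      have e3 := congrArg (Polynomial.eval s) hcw
      rw [Fintype.sum_sum_type] at e3
      simp only [r, Sum.elim_inl, Sum.elim_inr, Polynomial.eval_add, Polynomial.eval_finsetSum,
        Polynomial.eval_mul, Polynomial.eval_C, Polynomial.eval_zero, mul_assoc, ← Finset.mul_sum] at e3
      simp only [P, Q, eval_bigPoly, Polynomial.eval_neg, neg_mul, Finset.sum_neg_distrib]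
      have e4 : ∀ g : S → Polynomial ℝ, ∑ m : S, (g m).eval s * eval w (monomial (m : Fin n →₀ ℕ) (1 : ℝ)) =
        ∑ m : S, eval w (monomial (m : Fin n →₀ ℕ) (1 : ℝ)) * (g m).eval s := by
        intro g; simp only [mul_comm]
      rw [e4, e4]
      have e2' : (qw w').eval s * F (Fin.cons s w) = (pw w').eval s := e2
      change Polynomial.eval s (qw w') * ∑ i : S, eval w (monomial (i : Fin n →₀ ℕ) (1 : ℝ)) * Polynomial.eval s (c (Sum.inl i)) + Polynomial.eval s (pw w') * ∑ i : S, eval w (monomial (i : Fin n →₀ ℕ) (1 : ℝ)) * Polynomial.eval s (c (Sum.inr i)) = 0 at e3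
      rw [← e2'] at e3
      linear_combination e3
    refine ⟨P, Q, ?_, hfin⟩
    intro hQ0
    have hP0 : P = 0 := by
      apply MvPolynomial.funext_set J
      · intro i
        obtain ⟨x, hx⟩ := hJne i
        exact infinite_of_mem_nhds x ((hJo i).mem_nhds hx)
      · intro z hz
        rw [map_zero, ← hfin z (fun i => hz i trivial), hQ0, map_zero, zero_mul]
    have c1 := bigPoly_eq_zero _ _ hP0
    have c2 := bigPoly_eq_zero _ _ hQ0
    apply hc0
    funext i
    rcases i with i | i
    · simpa using congrFun c1 i
    · simpa using congrFun c2 i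

lemma local_rat {n : ℕ} {W : Set (Fin n → ℝ)} (hW : IsOpen W) {f : (Fin n → ℝ) → ℝ}
    (hf : ArcRational W f) (x : Fin n → ℝ) (hx : x ∈ W) :
    ∃ p q : MvPolynomial (Fin n) ℝ, q ≠ 0 ∧ ∀ᶠ y in 𝓝 x, y ∈ W ∧ eval y q * f y = eval y p := by
  obtain ⟨δ, hδ, hball⟩ := Metric.isOpen_iff.mp hW x hx
  let J : Fin n → Set ℝ := fun i => Metric.ball (x i) δ
  have hbox : ∀ z, (∀ i, z i ∈ J i) → z ∈ W := by
    intro z hz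
    apply hball
    rw [Metric.mem_ball, dist_pi_lt_iff hδ]
    exact hz
  obtain ⟨p, q, hq, hpq⟩ := sep_rat n J (fun i => Metric.isOpen_ball)
    (fun i => ⟨x i, Metric.mem_ball_self hδ⟩) f (by
      intro z hz i
      let γ : Fin n → Polynomial ℝ := fun j => if j = i then Polynomial.X else Polynomial.C (z j)
      have hγ : ∀ s, (fun j => (γ j).eval s) = Function.update z i s := by
        intro s; funext j
        by_cases h : j = i
        · subst h; simp [γ]
        · simp [γ, h]
      have hupd : ∀ s ∈ J i, Function.update z i s ∈ W := by
        intro s hs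
        apply hbox
        intro j
        by_cases h : j = i
        · subst h; simpa using hs
        · simpa [h] using hz j
      have key : ∀ s ∈ J i, ContinuousAt (fun t => f (Function.update z i t)) s ∧
          ∃ p q : Polynomial ℝ, q ≠ 0 ∧ ∀ᶠ t in 𝓝 s,
            q.eval t * f (Function.update z i t) = p.eval t := by
        intro s hs
        have := poly_arc hf γ s (by rw [hγ]; exact hupd s hs)
        simpa only [hγ] using this
      refine ⟨seg_rat _ _ ?_ key, fun s hs => (key s hs).1.continuousWithinAt⟩
      exact (convex_ball _ _).isPreconnected)
  refine ⟨p, q, hq, ?_⟩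
  filter_upwards [Metric.ball_mem_nhds x hδ] with y hy
  refine ⟨hball hy, hpq y fun i => ?_⟩
  rw [Metric.mem_ball, dist_pi_lt_iff hδ] at hy
  exact hy i

lemma order_lemma (A B : Polynomial ℝ) (g : ℝ → ℝ) (hg : ContinuousAt g 0)
    (h : ∀ᶠ s in 𝓝 (0:ℝ), A.eval s * g s = B.eval s) (k : ℕ) (hA : ∀ j < k, A.coeff j = 0) :
    (∀ j < k, B.coeff j = 0) ∧ B.coeff k = A.coeff k * g 0 := by
  induction k generalizing A B with
  | zero =>
    refine ⟨by simp, ?_⟩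
    have := h.self_of_nhds
    rw [Polynomial.coeff_zero_eq_eval_zero, Polynomial.coeff_zero_eq_eval_zero, this]
  | succ k ih =>
    have hA0 := hA 0 (Nat.succ_pos _)
    have hB0 : B.coeff 0 = 0 := by
      have := h.self_of_nhds
      rw [← Polynomial.coeff_zero_eq_eval_zero, ← Polynomial.coeff_zero_eq_eval_zero, hA0] at this
      linarith
    obtain ⟨A1, rfl⟩ := Polynomial.X_dvd_iff.mpr hA0
    obtain ⟨B1, rfl⟩ := Polynomial.X_dvd_iff.mpr hB0
    have h1 : ∀ᶠ s in 𝓝[≠] (0:ℝ), A1.eval s * g s = B1.eval s := by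
      filter_upwards [h.filter_mono nhdsWithin_le_nhds, self_mem_nhdsWithin] with s hs hs0
      apply mul_left_cancel₀ (a := s) hs0
      simp only [Polynomial.eval_mul, Polynomial.eval_X] at hs
      linarith
    have h0 := eq_of_punctured (A1.continuous.continuousAt.mul hg) B1.continuous.continuousAt h1
    have h2 : ∀ᶠ s in 𝓝 (0:ℝ), A1.eval s * g s = B1.eval s := by
      rw [eventually_nhdsWithin_iff] at h1
      filter_upwards [h1] with s hs
      by_cases hss : s = 0
      · subst hss; exact h0
      · exact hs hss
    obtain ⟨i1, i2⟩ := ih A1 B1 h2 (fun j hj => by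
      have := hA (j+1) (by omega)
      rwa [Polynomial.coeff_X_mul] at this)
    refine ⟨?_, by simpa [Polynomial.coeff_X_mul] using i2⟩
    intro j hj
    cases j with
    | zero => simp
    | succ j => rw [Polynomial.coeff_X_mul]; exact i1 j (by omega)

/-- Expansion of a polynomial along the line in direction `v`. -/
noncomputable def lineExp {n : ℕ} (v : Fin n → ℝ) :
    MvPolynomial (Fin n) ℝ →ₐ[ℝ] Polynomial (MvPolynomial (Fin n) ℝ) :=
  aeval (fun i => Polynomial.C (X i) + Polynomial.C (C (v i)) * Polynomial.X)

lemma lineExp_eval {n : ℕ} (v x : Fin n → ℝ) (P : MvPolynomial (Fin n) ℝ) (s : ℝ) :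
    ((lineExp v P).map (eval x)).eval s = eval (fun i => x i + v i * s) P := by
  have h : ((Polynomial.evalRingHom s).comp (Polynomial.mapRingHom (eval x))).comp
      (lineExp v).toRingHom = eval (fun i => x i + v i * s) := by
    apply MvPolynomial.ringHom_ext
    · intro r; simp [lineExp]
    · intro i; simp [lineExp]
  exact DFunLike.congr_fun h P

lemma arc_mero {n : ℕ} {W : Set (Fin n → ℝ)} (hWo : IsOpen W) {f : (Fin n → ℝ) → ℝ}
    (hf : ArcRational W f)
    (η : ℝ → Fin n → ℝ) (t₀ : ℝ) (hη : AnalyticAt ℝ η t₀) (hW : η t₀ ∈ W) :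
    ∃ p q : MvPolynomial (Fin n) ℝ, (¬ ∀ᶠ t in 𝓝 t₀, eval (η t) q = 0) ∧
      ∀ᶠ t in 𝓝 t₀, eval (η t) q * f (η t) = eval (η t) p := by
  obtain ⟨p, q, hq, hpq⟩ := local_rat hWo hf _ hW
  have hz : ∃ z, eval z q ≠ 0 := by
    by_contra h
    push Not at h
    exact hq (MvPolynomial.funext fun x => by simpa using h x)
  obtain ⟨z, hz⟩ := hz
  let v : Fin n → ℝ := z - η t₀
  have hex : ∃ k, ¬ ∀ᶠ t in 𝓝 t₀, eval (η t) ((lineExp v q).coeff k) = 0 := by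
    by_contra hcon
    push Not at hcon
    apply hz
    have h1 := lineExp_eval v (η t₀) q 1
    have h2 : (lineExp v q).map (eval (η t₀)) = 0 := by
      ext k
      rw [Polynomial.coeff_map, (hcon k).self_of_nhds]; simp
    rw [h2] at h1
    simp [v] at h1
    exact h1.symm
  classical
  let k := Nat.find hex
  refine ⟨(lineExp v p).coeff k, (lineExp v q).coeff k, Nat.find_spec hex, ?_⟩
  have hlt : ∀ᶠ t in 𝓝 t₀, ∀ j ∈ Finset.range k, eval (η t) ((lineExp v q).coeff j) = 0 := by
    rw [Filter.eventually_all_finset]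
    intro j hj
    have := Nat.find_min hex (Finset.mem_range.mp hj)
    push Not at this
    exact this
  have hev : ∀ᶠ t in 𝓝 t₀, ∀ᶠ y in 𝓝 (η t), y ∈ W ∧ eval y q * f y = eval y p :=
    hη.continuousAt.eventually (eventually_eventually_nhds.mpr hpq)
  filter_upwards [hlt, hev] with t h1 h2
  let γ : Fin n → Polynomial ℝ := fun i => Polynomial.C (η t i) + Polynomial.C (v i) * Polynomial.X
  have hγ : ∀ s, (fun i => (γ i).eval s) = fun i => η t i + v i * s := by
    intro s; funext i; simp [γ]
  have hγ0 : (fun i => (γ i).eval 0) = η t := by rw [hγ]; simp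
  have hc := (poly_arc hf γ 0 (by rw [hγ0]; exact h2.self_of_nhds.1)).1
  have hγc : Continuous (fun t => (fun i => (γ i).eval t) : ℝ → Fin n → ℝ) :=
    continuous_pi fun i => (γ i).continuous
  have h3 := order_lemma ((lineExp v q).map (eval (η t))) ((lineExp v p).map (eval (η t)))
    _ hc (by
      rw [← hγ0] at h2
      filter_upwards [hγc.continuousAt.eventually h2] with s hs
      rw [lineExp_eval, lineExp_eval, ← hγ]
      exact hs.2) k (fun j hj => by
        rw [Polynomial.coeff_map]; exact h1 j (Finset.mem_range.mpr hj))
  rw [hγ0, Polynomial.coeff_map, Polynomial.coeff_map] at h3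
  exact h3.2.symm

lemma arc_analytic {n : ℕ} {W : Set (Fin n → ℝ)} (hWo : IsOpen W) {f : (Fin n → ℝ) → ℝ}
    (hf : ArcRational W f) (hfc : ContinuousOn f W)
    (η : ℝ → Fin n → ℝ) (t₀ : ℝ) (hη : AnalyticAt ℝ η t₀) (hW : η t₀ ∈ W) :
    AnalyticAt ℝ (f ∘ η) t₀ := by
  obtain ⟨p, q, hq, hpq⟩ := arc_mero hWo hf η t₀ hη hW
  have hηi : ∀ i, AnalyticAt ℝ (fun t => η t i) t₀ := fun i =>
    ((ContinuousLinearMap.proj (R := ℝ) (φ := fun _ : Fin n => ℝ) i).analyticAt _).comp hη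
  have hP : ∀ P : MvPolynomial (Fin n) ℝ, AnalyticAt ℝ (fun t => eval (η t) P) t₀ := by
    intro P
    have := AnalyticAt.aeval_mvPolynomial (f := η) (z := t₀) (fun i => hηi i) P
    simpa [MvPolynomial.aeval_eq_eval] using this
  have hc : ContinuousAt (f ∘ η) t₀ :=
    ContinuousAt.comp (hfc.continuousAt (hWo.mem_nhds hW)) hη.continuousAt
  have hm : MeromorphicAt (f ∘ η) t₀ := by
    have h1 : MeromorphicAt (fun t => eval (η t) p / eval (η t) q) t₀ :=
      (hP p).meromorphicAt.fun_div (hP q).meromorphicAt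
    refine h1.congr ?_
    have h2 := ((hP q).eventually_eq_zero_or_eventually_ne_zero).resolve_left hq
    filter_upwards [h2, hpq.filter_mono nhdsWithin_le_nhds] with t ht1 ht2
    rw [← ht2]; simp; field_simp
  exact MeromorphicAt.analyticAt hm hc

open IntermediateField.algebraAdjoinAdjoin in
lemma field_deriv {K : Type} [Field K] [Algebra ℝ K] [Algebra.EssFiniteType ℝ K] (r : K)
    (h : ∀ D : Derivation ℝ K K, D r = 0 → D = 0) : Algebra.trdeg ℝ K ≤ 1 := by
  let L : IntermediateField ℝ K := IntermediateField.adjoin ℝ {r}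
  have hL : r ∈ L := IntermediateField.mem_adjoin_simple_self ℝ r
  have : Algebra.EssFiniteType L K := Algebra.EssFiniteType.of_comp ℝ L K
  have hsub : Subsingleton (Ω[K⁄L]) := by
    rw [← Module.subsingleton_dual_iff K]
    refine ⟨fun a b => ?_⟩
    have key : ∀ c : Module.Dual K (Ω[K⁄L]), c = 0 := by
      intro c
      let D : Derivation L K K := c.compDer (KaehlerDifferential.D L K)
      have h0 : D.restrictScalars ℝ = 0 := by
        apply h
        exact D.map_algebraMap ⟨r, hL⟩
      apply Derivation.liftKaehlerDifferential_unique
      ext x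
      have := DFunLike.congr_fun h0 x
      simpa [D] using this
    rw [key a, key b]
  have hfu : Algebra.FormallyUnramified L K := ⟨hsub⟩
  have hsep := (Algebra.FormallyUnramified.iff_isSeparable L K).mp hfu
  have halg : Algebra.IsAlgebraic L K := inferInstance
  have : Algebra.IsAlgebraic (Algebra.adjoin ℝ ({r} : Set K)) K :=
    (IsFractionRing.comap_isAlgebraic_iff (K := IntermediateField.adjoin ℝ {r})).mpr halg
  have := Algebra.IsAlgebraic.trdeg_le_cardinalMk (R := ℝ) (A := K) (s := {r})
  simpa using this

lemma vf_exists {n : ℕ} (I : Ideal (MvPolynomial (Fin n) ℝ)) [hI : I.IsPrime]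
    (ρ : MvPolynomial (Fin n) ℝ) (htr : ¬ Algebra.trdeg ℝ (MvPolynomial (Fin n) ℝ ⧸ I) ≤ 1) :
    ∃ V : Derivation ℝ (MvPolynomial (Fin n) ℝ) (MvPolynomial (Fin n) ℝ),
      (∀ P ∈ I, V P ∈ I) ∧ V ρ ∈ I ∧ ∃ i, V (X i) ∉ I := by
  let A := MvPolynomial (Fin n) ℝ ⧸ I
  let K := FractionRing A
  let π : MvPolynomial (Fin n) ℝ →ₐ[ℝ] K :=
    (IsScalarTower.toAlgHom ℝ A K).comp (Ideal.Quotient.mkₐ ℝ I)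
  have hπ : ∀ P, π P = 0 ↔ P ∈ I := by
    intro P
    change algebraMap A K (Ideal.Quotient.mk I P) = 0 ↔ _
    rw [IsFractionRing.to_map_eq_zero_iff, Ideal.Quotient.eq_zero_iff_mem]
  have hK : ¬ ∀ D : Derivation ℝ K K, D (π ρ) = 0 → D = 0 := by
    intro h
    apply htr
    exact (trdeg_le_of_injective (IsScalarTower.toAlgHom ℝ A K)
      (IsFractionRing.injective A K)).trans (field_deriv (π ρ) h)
  push Not at hK
  obtain ⟨D, hD, hD0⟩ := hK
  obtain ⟨b, hb⟩ := IsLocalization.exist_integer_multiples_of_finite (nonZeroDivisors A)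
    (fun i : Fin n => D (π (X i)))
  have hb0 : algebraMap A K (b : A) ≠ 0 := by
    intro h
    rw [IsFractionRing.to_map_eq_zero_iff] at h
    exact nonZeroDivisors.coe_ne_zero b h
  choose a ha using hb
  choose v hv using fun i => Ideal.Quotient.mk_surjective (a i)
  let V : Derivation ℝ (MvPolynomial (Fin n) ℝ) (MvPolynomial (Fin n) ℝ) := mkDerivation ℝ v
  have hVX : ∀ i, π (V (X i)) = algebraMap A K (b : A) * D (π (X i)) := by
    intro i
    simp only [V, mkDerivation_X]
    change algebraMap A K (Ideal.Quotient.mk I (v i)) = _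
    rw [hv, ha, Algebra.smul_def]
  have key : ∀ P, π (V P) = algebraMap A K (b : A) * D (π P) := by
    intro P
    induction P using MvPolynomial.induction_on with
    | C r =>
      have h1 : V (C r) = 0 := V.map_algebraMap r
      have h2 : π (C r) = algebraMap ℝ K r := π.commutes r
      rw [h1, h2, D.map_algebraMap]; simp
    | add p q hp hq => rw [map_add, map_add, map_add, map_add, hp, hq]; ring
    | mul_X p i hp =>
      rw [Derivation.leibniz, map_mul, Derivation.leibniz, map_add, smul_eq_mul, smul_eq_mul,
        map_mul, map_mul, hp, hVX, smul_eq_mul, smul_eq_mul]; ring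
  refine ⟨V, fun P hP => ?_, ?_, ?_⟩
  · rw [← hπ, key, (hπ P).mpr hP]; simp
  · rw [← hπ, key, hD]; simp
  · by_contra hcon
    push Not at hcon
    apply hD0
    have h1 : ∀ i, D (π (X i)) = 0 := by
      intro i
      have := hVX i
      rw [(hπ _).mpr (hcon i)] at this
      exact (mul_eq_zero.mp this.symm).resolve_left hb0
    have h2 : ∀ P, D (π P) = 0 := by
      intro P
      induction P using MvPolynomial.induction_on with
      | C r =>
        have h2 : π (C r) = algebraMap ℝ K r := π.commutes r
        rw [h2, D.map_algebraMap]
      | add p q hp hq => rw [map_add, map_add, hp, hq]; ring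
      | mul_X p i hp =>
        rw [map_mul, Derivation.leibniz, hp, h1]; simp
    ext x
    obtain ⟨y, z, hz, rfl⟩ := IsFractionRing.div_surjective (A := A) x
    obtain ⟨y, rfl⟩ := Ideal.Quotient.mk_surjective y
    obtain ⟨z, rfl⟩ := Ideal.Quotient.mk_surjective z
    change D (π y / π z) = 0
    rw [Derivation.leibniz_div, h2, h2]; simp

lemma deriv_along {n : ℕ} (V : Derivation ℝ (MvPolynomial (Fin n) ℝ) (MvPolynomial (Fin n) ℝ))
    (α : ℝ → Fin n → ℝ) (t : ℝ) (h : HasDerivAt α (fun i => eval (α t) (V (X i))) t)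
    (P : MvPolynomial (Fin n) ℝ) :
    HasDerivAt (fun s => eval (α s) P) (eval (α t) (V P)) t := by
  induction P using MvPolynomial.induction_on with
  | C r =>
    have h1 : V (C r) = 0 := V.map_algebraMap r
    rw [h1]
    simpa using hasDerivAt_const t r
  | add p q hp hq =>
    simpa using hp.fun_add hq
  | mul_X p i hp =>
    have hi := (hasDerivAt_pi.mp h) i
    have := hp.fun_mul hi
    rw [Derivation.leibniz]
    simp only [map_mul, map_add, smul_eq_mul, eval_X]
    refine this.congr_deriv ?_
    ring

lemma flow_stays {n : ℕ} (V : Derivation ℝ (MvPolynomial (Fin n) ℝ) (MvPolynomial (Fin n) ℝ))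
    (J : Ideal (MvPolynomial (Fin n) ℝ)) (hJ : ∀ P ∈ J, V P ∈ J) (y : Fin n → ℝ)
    (hy : y ∈ realPoints J) :
    ∃ α : ℝ → Fin n → ℝ, α 0 = y ∧ HasDerivAt α (fun i => eval y (V (X i))) 0 ∧
      ∀ᶠ t in 𝓝 (0:ℝ), α t ∈ realPoints J := by
  have hsm : ContDiffAt ℝ 1 (fun x : Fin n → ℝ => fun i => eval x (V (X i))) y := by
    rw [contDiffAt_pi]
    intro i
    have h2 := AnalyticAt.aeval_mvPolynomial (f := fun x : Fin n → ℝ => x) (z := y) (fun j =>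
      ((ContinuousLinearMap.proj (R := ℝ) (φ := fun _ : Fin n => ℝ) j).analyticAt _)) (V (X i))
    exact (by simpa [MvPolynomial.aeval_eq_eval] using h2 :
      AnalyticAt ℝ (fun x => eval x (V (X i))) y).contDiffAt
  obtain ⟨α, h0, ε, hε, hα⟩ :=
    ContDiffAt.exists_forall_mem_closedBall_exists_eq_forall_mem_Ioo_hasDerivAt₀ hsm 0
  have hα0 := hα 0 (by constructor <;> linarith)
  refine ⟨α, h0, by simpa [h0] using hα0, ?_⟩
  have hαe : ∀ᶠ t in 𝓝 (0:ℝ), HasDerivAt α (fun i => eval (α t) (V (X i))) t := by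
    filter_upwards [Ioo_mem_nhds (a := 0 - ε) (b := 0 + ε) (x := (0:ℝ)) (by linarith) (by linarith)]
      with t ht using hα t ht
  obtain ⟨m, F, hF⟩ := Submodule.fg_iff_exists_fin_generating_family.mp
    (IsNoetherian.noetherian J)
  have hFJ : ∀ i, F i ∈ J := fun i => by rw [← hF]; exact Submodule.subset_span ⟨i, rfl⟩
  have hcoef : ∀ i, ∃ c : Fin m → MvPolynomial (Fin n) ℝ, ∑ j, c j • F j = V (F i) := by
    intro i
    have := hJ _ (hFJ i)
    rw [← hF] at this
    exact (Submodule.mem_span_range_iff_exists_fun _).mp this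
  choose c hc using hcoef
  let u : ℝ → Fin m → ℝ := fun t i => eval (α t) (F i)
  let M : ℝ → (Fin m → ℝ) → (Fin m → ℝ) := fun t w i => ∑ j, eval (α t) (c i j) * w j
  have hu : ∀ᶠ t in 𝓝 (0:ℝ), HasDerivAt u (M t (u t)) t ∧ u t ∈ (Set.univ : Set (Fin m → ℝ)) := by
    filter_upwards [hαe] with t ht
    refine ⟨?_, trivial⟩
    rw [hasDerivAt_pi]
    intro i
    have := deriv_along V α t ht (F i)
    rw [← hc i] at this
    simpa [M, u] using this
  have hz : ∀ᶠ t in 𝓝 (0:ℝ), HasDerivAt (fun _ : ℝ => (0 : Fin m → ℝ)) (M t 0) t ∧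
      (0 : Fin m → ℝ) ∈ (Set.univ : Set (Fin m → ℝ)) := by
    refine Eventually.of_forall fun t => ⟨?_, trivial⟩
    have : M t 0 = 0 := by funext i; simp [M]
    rw [this]
    exact hasDerivAt_const t 0
  have hbd : ∃ B : ℝ, 0 ≤ B ∧ ∀ᶠ t in 𝓝 (0:ℝ), ∀ i j, |eval (α t) (c i j)| ≤ B := by
    refine ⟨∑ i, ∑ j, (|eval (α 0) (c i j)| + 1), by positivity, ?_⟩
    rw [eventually_all]; intro i
    rw [eventually_all]; intro j
    have hcont : ContinuousAt (fun t => |eval (α t) (c i j)|) 0 :=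
      ((MvPolynomial.continuous_eval (c i j)).continuousAt.comp hα0.continuousAt).abs
    have h1 := hcont.eventually (gt_mem_nhds (lt_add_one _))
    filter_upwards [h1] with t ht
    refine ht.le.trans ?_
    refine le_trans ?_ (Finset.single_le_sum (f := fun i => ∑ j, (|eval (α 0) (c i j)| + 1))
      (fun i _ => by positivity) (Finset.mem_univ i))
    exact Finset.single_le_sum (f := fun j => (|eval (α 0) (c i j)| + 1))
      (fun i _ => by positivity) (Finset.mem_univ j)
  obtain ⟨B, hB0, hB⟩ := hbd
  have hlip : ∀ᶠ t in 𝓝 (0:ℝ), LipschitzOnWith (Real.toNNReal (m * B)) (M t) Set.univ := by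
    filter_upwards [hB] with t ht
    rw [lipschitzOnWith_univ]
    apply LipschitzWith.of_dist_le_mul
    intro w w'
    rw [Real.coe_toNNReal _ (by positivity), dist_pi_le_iff (by positivity)]
    intro i
    rw [Real.dist_eq]
    have : M t w i - M t w' i = ∑ j, eval (α t) (c i j) * (w j - w' j) := by
      simp only [M, ← Finset.sum_sub_distrib]; congr 1; funext j; ring
    rw [this]
    refine (Finset.abs_sum_le_sum_abs _ _).trans ?_
    have : ∀ j ∈ Finset.univ, |eval (α t) (c i j) * (w j - w' j)| ≤ B * dist w w' := by
      intro j _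
      rw [abs_mul]
      have h2 : |w j - w' j| ≤ dist w w' := by rw [← Real.dist_eq]; exact dist_le_pi_dist w w' j
      exact mul_le_mul (ht i j) h2 (abs_nonneg _) hB0
    refine (Finset.sum_le_card_nsmul _ _ _ this).trans ?_
    simp; linarith
  have huniq := ODE_solution_unique_of_eventually hlip hu hz (by
    funext i
    simp only [u, h0]
    exact hy _ (hFJ i))
  filter_upwards [huniq] with t ht
  intro P hP
  rw [← hF] at hP
  obtain ⟨d, rfl⟩ := (Submodule.mem_span_range_iff_exists_fun _).mp hP
  rw [map_sum]
  apply Finset.sum_eq_zero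
  intro i _
  have : eval (α t) (F i) = 0 := congrFun ht i
  rw [smul_eq_mul, map_mul, this, mul_zero]

lemma isClosed_realPoints {n : ℕ} (I : Ideal (MvPolynomial (Fin n) ℝ)) :
    IsClosed (realPoints I) := by
  have : realPoints I = ⋂ P ∈ I, {x | eval x P = 0} := by ext x; simp [realPoints]
  rw [this]
  exact isClosed_biInter fun P _ => isClosed_eq (MvPolynomial.continuous_eval P) continuous_const

lemma crit_point {n : ℕ} (V : Derivation ℝ (MvPolynomial (Fin n) ℝ) (MvPolynomial (Fin n) ℝ))
    (J : Ideal (MvPolynomial (Fin n) ℝ)) (hJ : ∀ P ∈ J, V P ∈ J)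
    (hb : Bornology.IsBounded (realPoints J)) (hne : (realPoints J).Nonempty)
    (h : MvPolynomial (Fin n) ℝ) :
    ∃ y ∈ realPoints J, (∀ z ∈ realPoints J, eval z h ≤ eval y h) ∧ eval y (V h) = 0 := by
  have hc : IsCompact (realPoints J) := Metric.isCompact_of_isClosed_isBounded
    (isClosed_realPoints J) hb
  obtain ⟨y, hy, hmax⟩ := hc.exists_isMaxOn hne (MvPolynomial.continuous_eval h).continuousOn
  refine ⟨y, hy, hmax, ?_⟩
  obtain ⟨α, h0, hα, hst⟩ := flow_stays V J hJ y hy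
  have hd := deriv_along V α 0 (by rw [h0]; exact hα) h
  rw [h0] at hd
  have hloc : IsLocalMax (fun t => eval (α t) h) 0 := by
    filter_upwards [hst] with t ht
    rw [h0]
    exact hmax ht
  exact hloc.hasDerivAt_eq_zero hd

lemma stable_sup {n : ℕ} (V : Derivation ℝ (MvPolynomial (Fin n) ℝ) (MvPolynomial (Fin n) ℝ))
    (I : Ideal (MvPolynomial (Fin n) ℝ)) (hI : ∀ P ∈ I, V P ∈ I)
    (s : Set (MvPolynomial (Fin n) ℝ)) (hs : ∀ a ∈ s, V a ∈ I) :
    ∀ P ∈ I ⊔ Ideal.span s, V P ∈ I ⊔ Ideal.span s := by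
  have hspan : ∀ P ∈ Ideal.span s, V P ∈ I ⊔ Ideal.span s := by
    intro P hP
    induction hP using Submodule.span_induction with
    | mem a ha => exact Ideal.mem_sup_left (hs a ha)
    | zero => simp
    | add a b _ _ h1 h2 => rw [map_add]; exact Ideal.add_mem _ h1 h2
    | smul c a ha h =>
      rw [smul_eq_mul, Derivation.leibniz, smul_eq_mul, smul_eq_mul]
      refine Ideal.add_mem _ (Ideal.mul_mem_left _ _ h) (Ideal.mul_mem_right _ _ ?_)
      exact Ideal.mem_sup_right ha
  intro P hP
  obtain ⟨a, ha, b, hb, rfl⟩ := Submodule.mem_sup.mp hP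
  rw [map_add]
  exact Ideal.add_mem _ (Ideal.mem_sup_left (hI a ha)) (hspan b hb)

lemma realPoints_sup {n : ℕ} (I : Ideal (MvPolynomial (Fin n) ℝ))
    (s : Set (MvPolynomial (Fin n) ℝ)) (y : Fin n → ℝ) :
    y ∈ realPoints (I ⊔ Ideal.span s) ↔ y ∈ realPoints I ∧ ∀ a ∈ s, eval y a = 0 := by
  constructor
  · intro h
    exact ⟨fun P hP => h P (Ideal.mem_sup_left hP),
      fun a ha => h a (Ideal.mem_sup_right (Ideal.subset_span ha))⟩
  · rintro ⟨h1, h2⟩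
    have hle : I ⊔ Ideal.span s ≤ RingHom.ker (eval y) := by
      rw [sup_le_iff, Ideal.span_le]
      exact ⟨fun P hP => h1 P hP, fun a ha => h2 a ha⟩
    exact fun P hP => hle hP

/-- Squared distance to a point. -/
noncomputable def sqd {n : ℕ} (x : Fin n → ℝ) : MvPolynomial (Fin n) ℝ :=
  ∑ i, (X i - C (x i)) ^ 2

lemma eval_sqd {n : ℕ} (x y : Fin n → ℝ) : eval y (sqd x) = ∑ i, (y i - x i) ^ 2 := by
  simp [sqd]

lemma sq_le_sqd {n : ℕ} (x y : Fin n → ℝ) (i : Fin n) : (y i - x i) ^ 2 ≤ eval y (sqd x) := by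
  rw [eval_sqd]
  exact Finset.single_le_sum (f := fun i => (y i - x i) ^ 2) (fun i _ => sq_nonneg _)
    (Finset.mem_univ i)

lemma dist_lt_of_sqd {n : ℕ} (x y : Fin n → ℝ) (ε : ℝ) (hε : 0 < ε)
    (h : eval y (sqd x) < ε ^ 2) : dist y x < ε := by
  rw [dist_pi_lt_iff hε]
  intro i
  rw [Real.dist_eq]
  exact abs_lt_of_sq_lt_sq ((sq_le_sqd x y i).trans_lt h) hε.le

lemma mem_closure_sqd {n : ℕ} (x : Fin n → ℝ) (T : Set (Fin n → ℝ)) :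
    x ∈ closure T ↔ ∀ δ > 0, ∃ y ∈ T, eval y (sqd x) < δ := by
  constructor
  · intro h δ hδ
    have hn : {y | eval y (sqd x) < δ} ∈ 𝓝 x := by
      refine (isOpen_lt (MvPolynomial.continuous_eval _) continuous_const).mem_nhds ?_
      simpa [eval_sqd] using hδ
    obtain ⟨y, hy1, hy2⟩ := mem_closure_iff_nhds.mp h _ hn
    exact ⟨y, hy2, hy1⟩
  · intro h
    rw [Metric.mem_closure_iff]
    intro ε hε
    obtain ⟨y, hy, hlt⟩ := h (ε ^ 2) (by positivity)
    exact ⟨y, hy, by rw [dist_comm]; exact dist_lt_of_sqd x y ε hε hlt⟩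

lemma curve_sel {n : ℕ} (g : MvPolynomial (Fin n) ℝ) (x : Fin n → ℝ) (hg : eval x g ≤ 0)
    (hcl : x ∈ closure {y | 0 < eval y g}) :
    ∃ I : Ideal (MvPolynomial (Fin n) ℝ), I.IsPrime ∧
      ringKrullDim (MvPolynomial (Fin n) ℝ ⧸ I) = 1 ∧ x ∈ realPoints I ∧
      x ∈ closure (realPoints I ∩ {y | 0 < eval y g}) := by
  obtain ⟨I, hIS, hmax⟩ := set_has_maximal_iff_noetherian.mpr
    (inferInstance : IsNoetherianRing (MvPolynomial (Fin n) ℝ))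
    {I | x ∈ closure (realPoints I ∩ {y | 0 < eval y g})} ⟨⊥, by
      have : realPoints (⊥ : Ideal (MvPolynomial (Fin n) ℝ)) = Set.univ := by
        ext y; simp [realPoints]
      simpa [this] using hcl⟩
  have hIS' : x ∈ closure (realPoints I ∩ {y | 0 < eval y g}) := hIS
  have key : ∀ h, x ∈ closure (realPoints I ∩ {y | 0 < eval y g} ∩ {y | eval y h = 0}) → h ∈ I := by
    intro h hh
    by_contra hhI
    have hlt : I < I ⊔ Ideal.span {h} := by
      refine lt_of_le_of_ne le_sup_left fun he => hhI ?_
      rw [he]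
      exact Ideal.mem_sup_right (Ideal.mem_span_singleton_self h)
    refine hmax (I ⊔ Ideal.span {h}) ?_ hlt
    refine closure_mono ?_ hh
    rintro y ⟨⟨h1, h2⟩, h3⟩
    refine ⟨(realPoints_sup _ _ _).mpr ⟨h1, ?_⟩, h2⟩
    rintro a rfl
    exact h3
  have hxI : x ∈ realPoints I :=
    (isClosed_realPoints I).closure_subset_iff.mpr Set.inter_subset_left hIS'
  have hprime : Ideal.IsPrime I := by
    rw [Ideal.isPrime_iff]
    refine ⟨?_, ?_⟩
    · rintro rfl
      have := hxI 1 trivial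
      simp at this
    · intro a b hab
      have : x ∈ closure ((realPoints I ∩ {y | 0 < eval y g} ∩ {y | eval y a = 0}) ∪
          (realPoints I ∩ {y | 0 < eval y g} ∩ {y | eval y b = 0})) := by
        refine closure_mono ?_ hIS'
        rintro y ⟨h1, h2⟩
        have := h1 _ hab
        rw [map_mul, mul_eq_zero] at this
        rcases this with h | h
        · exact Or.inl ⟨⟨h1, h2⟩, h⟩
        · exact Or.inr ⟨⟨h1, h2⟩, h⟩
      rw [closure_union] at this
      exact this.imp (key a) (key b)
  refine ⟨I, hprime, ?_, hxI, hIS'⟩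
  rw [mem_closure_sqd] at hIS'
  obtain ⟨y, ⟨hyI, hyg⟩, -⟩ := hIS' 1 one_pos
  have hyx : y ≠ x := by
    rintro rfl
    exact absurd hyg (not_lt.mpr hg)
  apply dim_one I y x hyI hxI hyx
  by_contra htr
  obtain ⟨V, hVI, hVρ, i₀, hi₀⟩ := vf_exists I (sqd x) htr
  have hbd : ∀ (s : Set (MvPolynomial (Fin n) ℝ)) (r : ℝ), (sqd x - C r) ∈ s →
      Bornology.IsBounded (realPoints (I ⊔ Ideal.span s)) := by
    intro s r hr
    refine (Metric.isBounded_ball (x := x) (r := |r| + 1)).subset ?_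
    intro z hz
    have h1 := ((realPoints_sup _ _ _).mp hz).2 _ hr
    rw [map_sub, eval_C] at h1
    apply dist_lt_of_sqd _ _ _ (by positivity)
    have := le_abs_self r
    have := abs_nonneg r
    nlinarith
  have hVC : ∀ r : ℝ, V (C r) = 0 := fun r => V.map_algebraMap r
  have hVg : V g ∈ I := by
    apply key
    rw [mem_closure_sqd]
    intro δ hδ
    obtain ⟨y, ⟨hyI, hyg⟩, hyδ⟩ := hIS' δ hδ
    let s : Set (MvPolynomial (Fin n) ℝ) := {sqd x - C (eval y (sqd x))}
    have hyJ : y ∈ realPoints (I ⊔ Ideal.span s) := by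
      refine (realPoints_sup _ _ _).mpr ⟨hyI, ?_⟩
      rintro a rfl
      simp
    obtain ⟨z, hz, hzm, hz0⟩ := crit_point V (I ⊔ Ideal.span s) (stable_sup V I hVI s (by
      rintro a rfl
      rw [map_sub, hVC, sub_zero]; exact hVρ)) (hbd s _ rfl) ⟨y, hyJ⟩ g
    obtain ⟨hz1, hz2⟩ := (realPoints_sup _ _ _).mp hz
    have hz3 := hz2 _ rfl
    rw [map_sub, eval_C] at hz3
    refine ⟨z, ⟨⟨hz1, lt_of_lt_of_le hyg (hzm y hyJ)⟩, hz0⟩, by linarith⟩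
  apply hi₀
  apply key
  rw [mem_closure_sqd]
  intro δ hδ
  obtain ⟨y, ⟨hyI, hyg⟩, hyδ⟩ := hIS' δ hδ
  let s : Set (MvPolynomial (Fin n) ℝ) := {sqd x - C (eval y (sqd x)), g - C (eval y g)}
  have hyJ : y ∈ realPoints (I ⊔ Ideal.span s) := by
    refine (realPoints_sup _ _ _).mpr ⟨hyI, ?_⟩
    rintro a (rfl | rfl) <;> simp
  obtain ⟨z, hz, hzm, hz0⟩ := crit_point V (I ⊔ Ideal.span s) (stable_sup V I hVI s (by
    rintro a (rfl | rfl)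
    · rw [map_sub, hVC, sub_zero]; exact hVρ
    · rw [map_sub, hVC, sub_zero]; exact hVg)) (hbd s _ (Or.inl rfl)) ⟨y, hyJ⟩ (X i₀)
  obtain ⟨hz1, hz2⟩ := (realPoints_sup _ _ _).mp hz
  have hz3 := hz2 _ (Or.inl rfl)
  have hz4 := hz2 _ (Or.inr rfl)
  rw [map_sub, eval_C] at hz3 hz4
  have hyg' : 0 < eval y g := hyg
  refine ⟨z, ⟨⟨hz1, ?_⟩, hz0⟩, by linarith⟩
  change 0 < eval z g
  linarith

lemma cont_at {n : ℕ} {W : Set (Fin n → ℝ)} (hWo : IsOpen W) {f : (Fin n → ℝ) → ℝ}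
    (hf : ArcRational W f) (x : Fin n → ℝ) (hx : x ∈ W) : ContinuousAt f x := by
  obtain ⟨p, q, hq, hpq⟩ := local_rat hWo hf x hx
  have hz : ∃ z, eval z q ≠ 0 := by
    by_contra h
    push Not at h
    exact hq (MvPolynomial.funext fun x => by simpa using h x)
  obtain ⟨z, hz⟩ := hz
  by_contra hnc
  have hfr : ∃ ε > 0, ∃ᶠ y in 𝓝 x, ε < |f y - f x| := by
    by_contra hcon
    push Not at hcon
    apply hnc
    rw [ContinuousAt, Metric.tendsto_nhds]
    intro ε hε
    have := hcon (ε / 2) (by positivity)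
    filter_upwards [this] with y hy
    rw [Real.dist_eq]
    linarith
  obtain ⟨ε, hε, hfr⟩ := hfr
  -- move to points where the denominator is nonzero
  have hfr2 : ∃ᶠ y in 𝓝 x, eval y q ≠ 0 ∧ ε < |f y - f x| := by
    rw [frequently_iff]
    intro U hU
    obtain ⟨U', hU'U, hU'o, hxU'⟩ := mem_nhds_iff.mp hU
    obtain ⟨y, hyε, hyU, hyW⟩ := (hfr.and_eventually
      ((hU'o.eventually_mem hxU').and (hWo.eventually_mem hx))).exists
    let γ : Fin n → Polynomial ℝ := fun i => Polynomial.C (y i) + Polynomial.C (z i - y i) * Polynomial.X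
    have hγ0 : (fun i => (γ i).eval 0) = y := by funext i; simp [γ]
    have hγ1 : (fun i => (γ i).eval 1) = z := by funext i; simp [γ]
    have hγc : Continuous (fun t => (fun i => (γ i).eval t) : ℝ → Fin n → ℝ) :=
      continuous_pi fun i => (γ i).continuous
    have hc := (poly_arc hf γ 0 (by rw [hγ0]; exact hyW)).1
    have hqγ : aeval γ q ≠ 0 := by
      intro h
      have := eval_arc γ 1 q
      rw [h, hγ1] at this
      exact hz (by simpa using this.symm)
    have e1 := poly_eventually_ne _ hqγ 0
    have e2 : ∀ᶠ t in 𝓝 (0:ℝ), (fun i => (γ i).eval t) ∈ U' :=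
      hγc.continuousAt.eventually (hU'o.eventually_mem (by rw [← hγ0] at hyU; exact hyU))
    have e3 : ∀ᶠ t in 𝓝 (0:ℝ), ε < |f (fun i => (γ i).eval t) - f x| :=
      ((hc.sub continuousAt_const).abs).eventually (lt_mem_nhds (by simpa [hγ0] using hyε))
    obtain ⟨t, h1, h2, h3⟩ := (e1.and ((e2.and e3).filter_mono nhdsWithin_le_nhds)).exists
    rw [eval_arc] at h1
    exact ⟨_, hU'U h2, h1, h3⟩
  let g : MvPolynomial (Fin n) ℝ := q ^ 2 * ((p - C (f x) * q) ^ 2 - C (ε ^ 2) * q ^ 2)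
  have hgeval : ∀ y, eval y q * f y = eval y p →
      eval y g = eval y q ^ 4 * ((f y - f x) ^ 2 - ε ^ 2) := by
    intro y hy
    simp only [g, map_mul, map_pow, map_sub, eval_C, ← hy]
    ring
  have hgx : eval x g ≤ 0 := by
    rw [hgeval x hpq.self_of_nhds.2]
    have : 0 ≤ eval x q ^ 4 := by positivity
    nlinarith [sq_nonneg ε]
  have hcl : x ∈ closure {y | 0 < eval y g} := by
    rw [mem_closure_iff_frequently]
    refine (hfr2.and_eventually hpq).mono ?_
    rintro y ⟨⟨h1, h2⟩, -, h3⟩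
    change 0 < eval y g
    rw [hgeval y h3]
    have h4 : ε ^ 2 < (f y - f x) ^ 2 := by
      rw [← sq_abs (f y - f x)]
      exact pow_lt_pow_left₀ h2 hε.le two_ne_zero
    have : 0 < eval y q ^ 4 := by positivity
    exact mul_pos this (by linarith)
  obtain ⟨I, hI, hdim, hxI, hxcl⟩ := curve_sel g x hgx hcl
  obtain ⟨U, hUo, hxU, hUW, hcont, -⟩ := hf x hx I hI hdim hxI
  have hcx := hcont x ⟨hxU, hxI⟩
  have hev : ∀ᶠ y in 𝓝[U ∩ realPoints I] x, |f y - f x| < ε := by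
    have := Metric.tendsto_nhds.mp hcx.tendsto ε hε
    simpa only [Real.dist_eq] using this
  rw [eventually_nhdsWithin_iff] at hev
  obtain ⟨y, ⟨hyI, hyg⟩, hy1, hy2, hy3, hy4⟩ := ((mem_closure_iff_frequently.mp hxcl).and_eventually
    (hev.and ((hUo.eventually_mem hxU).and hpq))).exists
  have h5 := hy1 ⟨hy2, hyI⟩
  have hyg' : 0 < eval y g := hyg
  rw [hgeval y hy4] at hyg'
  have h6 : (f y - f x) ^ 2 < ε ^ 2 := by
    rw [← sq_abs (f y - f x)]
    exact pow_lt_pow_left₀ h5 (abs_nonneg _) two_ne_zero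
  have : 0 ≤ eval y q ^ 4 := by positivity
  nlinarith

/-- **Theorem 1.11** for open subsets of `ℝⁿ`. An arc-rational function on a nonempty
open set `W ⊆ ℝⁿ` is continuous and arc-analytic: its composition with every real
analytic arc `η : (-1,1) → W` is real-analytic. -/
theorem arcRational_is_continuous_and_arcAnalytic
    (n : ℕ) (W : Set (Fin n → ℝ)) (hW : IsOpen W) (hne : W.Nonempty)
    (f : (Fin n → ℝ) → ℝ) (hf : ArcRational W f) :
    ContinuousOn f W ∧
    ∀ η : ℝ → (Fin n → ℝ), AnalyticOn ℝ η (Set.Ioo (-1 : ℝ) 1) →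
      (∀ t ∈ Set.Ioo (-1 : ℝ) 1, η t ∈ W) →
      AnalyticOn ℝ (f ∘ η) (Set.Ioo (-1 : ℝ) 1) := by
  have hc : ContinuousOn f W := fun x hx => (cont_at hW hf x hx).continuousWithinAt
  refine ⟨hc, fun η hη hηW => ?_⟩
  rw [isOpen_Ioo.analyticOn_iff_analyticOnNhd] at hη ⊢
  intro t ht
  exact arc_analytic hW hf hc η t (hη t ht) (hηW t ht)
end

section
/- Let U ⊆ ℂ² be a nonempty connected open set and let f : U → ℂ be a function such that for every irreducible polynomial P ∈ ℂ[x,y] and every set A ⊆ U with A contained in {(x,y) ∈ ℂ² : P(x,y) = 0 and ∇P(x,y) ≠ (0,0)}, open in the Euclidean subspace topology of the complex zero set of P, and homeomorphic to the open unit disc in ℂ, the restriction f|_A is regular, i.e., for every a ∈ A there exist polynomials p, q ∈ ℂ[x,y] with q(a) ≠ 0 and f(z) = p(z)/q(z) for every z ∈ A with q(z) ≠ 0. Then f is regular on U. (Theorem 9.1 for domains in ℂ².) -/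
section
open MvPolynomial

/-- The complex zero set of a polynomial in two variables. -/
def complexZeroSet (P : MvPolynomial (Fin 2) ℂ) : Set (Fin 2 → ℂ) :=
  {v | eval v P = 0}

/-- `A` is a smooth algebraic arc of the complex plane curve `P = 0`: it consists of
smooth points of the curve, is open in the subspace topology of the complex zero set of
`P`, and is homeomorphic to the open unit disc. -/
def IsSmoothComplexArc (P : MvPolynomial (Fin 2) ℂ) (A : Set (Fin 2 → ℂ)) : Prop :=
  (∀ v ∈ A, eval v P = 0 ∧
    (eval v (pderiv 0 P) ≠ 0 ∨ eval v (pderiv 1 P) ≠ 0)) ∧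
  (∃ O : Set (Fin 2 → ℂ), IsOpen O ∧ A = O ∩ complexZeroSet P) ∧
  Nonempty (A ≃ₜ (Metric.ball (0 : ℂ) 1))

end

namespace ArcHelpers
open Polynomial


lemma exists_relation {R : Type} [CommRing R] [IsDomain R] {ι : Type} [Fintype ι] [DecidableEq ι]
    {S : Type} (w : S → ι → R)
    (h : ∀ s : ι → S, (Matrix.of (fun i => w (s i))).det = 0) :
    ∃ c : ι → R, c ≠ 0 ∧ ∀ y, ∑ i, c i * w y i = 0 := by
  let K := FractionRing R
  let wK : S → ι → K := fun y i => algebraMap R K (w y i)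
  have hlt : Submodule.span K (Set.range wK) < ⊤ := by
    rw [lt_top_iff_ne_top]
    intro htop
    obtain ⟨b, hb, hspan, hli⟩ := exists_linearIndependent K (Set.range wK)
    rw [htop] at hspan
    let B := Module.Basis.mk hli (by simp [hspan])
    have : Fintype b := FiniteDimensional.fintypeBasisIndex B
    have hcard : Fintype.card ι = Fintype.card b := by
      rw [← Module.finrank_eq_card_basis B]; simp
    let e : ι ≃ b := Fintype.equivOfCardEq hcard
    choose s hs using fun i : ι => hb (e i).2
    have h1 := h s
    have h2 : LinearIndependent K (fun i => ((e i : b) : ι → K)) := hli.comp e e.injective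
    have h3 : (Matrix.of (fun i => w (s i))).map (algebraMap R K) =
        Matrix.of (fun i => ((e i : b) : ι → K)) := by
      ext i j
      rw [Matrix.of_apply, ← hs i]; rfl
    have h4 : IsUnit (Matrix.of (fun i => ((e i : b) : ι → K))) :=
      Matrix.linearIndependent_rows_iff_isUnit.mp h2
    rw [Matrix.isUnit_iff_isUnit_det, ← h3] at h4
    have h5 := RingHom.map_det (algebraMap R K) (Matrix.of (fun i => w (s i)))
    rw [h1, map_zero] at h5
    rw [RingHom.mapMatrix_apply] at h5
    rw [← h5] at h4
    exact not_isUnit_zero h4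
  obtain ⟨g, hg0, hg⟩ := Submodule.exists_le_ker_of_lt_top _ hlt
  obtain ⟨b, hb⟩ := IsLocalization.exist_integer_multiples_of_finite (nonZeroDivisors R)
    (fun i : ι => g (Pi.single i 1))
  choose c hc using hb
  have hinj := IsFractionRing.injective R K
  have hb0 : algebraMap R K (b : R) ≠ 0 := by
    rw [Ne, map_eq_zero_iff _ hinj]
    exact nonZeroDivisors.ne_zero b.2
  refine ⟨c, ?_, ?_⟩
  · rintro rfl
    apply hg0
    refine LinearMap.pi_ext' fun i => LinearMap.ext_ring ?_
    have := hc i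
    simp only [Pi.zero_apply, map_zero, Algebra.smul_def] at this
    simpa [hb0] using this.symm
  · intro y
    apply hinj
    have h1 : g (wK y) = 0 := hg (Submodule.subset_span ⟨y, rfl⟩)
    rw [LinearMap.pi_apply_eq_sum_univ g (wK y)] at h1
    simp only [map_sum, map_mul, map_zero, hc, Algebra.smul_def]
    have : ∀ i : ι, (fun j : ι => if i = j then (1:K) else 0) = Pi.single i 1 := by
      intro i; ext j; simp [Pi.single_apply, eq_comm]
    simp only [this] at h1
    calc _ = algebraMap R K b * ∑ i, wK y i • g (Pi.single i 1) := by
          rw [Finset.mul_sum]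
          refine Finset.sum_congr rfl fun i _ => ?_
          simp only [wK, smul_eq_mul]; ring
      _ = 0 := by rw [h1, mul_zero]

lemma poly_zero_of_infinite {p : ℂ[X]} {S : Set ℂ} (hS : S.Infinite)
    (h : ∀ z ∈ S, p.eval z = 0) : p = 0 :=
  Polynomial.eq_zero_of_infinite_isRoot p (hS.mono h)

lemma ball_infinite (c : ℂ) {r : ℝ} (hr : 0 < r) : (Metric.ball c r).Infinite := by
  refine infinite_of_mem_nhds c (Metric.ball_mem_nhds c hr)

lemma infinite_diff_roots {S : Set ℂ} (hS : S.Infinite) {q : ℂ[X]} (hq : q ≠ 0) :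
    (S ∩ {z | q.eval z ≠ 0}).Infinite := by
  have : {z | q.IsRoot z}.Finite := Polynomial.finite_setOfPred_isRoot hq
  refine (hS.sdiff this).mono ?_
  rintro z ⟨h1, h2⟩
  exact ⟨h1, h2⟩

/-- cancel a nonzero factor -/
lemma poly_zero_of_mul {p q : ℂ[X]} {S : Set ℂ} (hS : S.Infinite) (hq : q ≠ 0)
    (h : ∀ z ∈ S, q.eval z ≠ 0 → p.eval z = 0) : p = 0 :=
  poly_zero_of_infinite (infinite_diff_roots hS hq) fun z hz => h z hz.1 hz.2

lemma one_var {c : ℂ} {r : ℝ} (hr : 0 < r) (g : ℂ → ℂ)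
    (h : ∀ a ∈ Metric.ball c r, ∃ p q : ℂ[X], q.eval a ≠ 0 ∧
      ∀ z ∈ Metric.ball c r, q.eval z ≠ 0 → g z = p.eval z / q.eval z) :
    ∃ p q : ℂ[X], ∀ z ∈ Metric.ball c r, q.eval z ≠ 0 ∧ g z * q.eval z = p.eval z := by
  obtain ⟨p0, q0, h0, hz0⟩ := h c (Metric.mem_ball_self hr)
  have hq0 : q0 ≠ 0 := by rintro rfl; simp at h0
  obtain ⟨q, p, d, hrel, rfl, rfl⟩ := UniqueFactorizationMonoid.exists_reduced_factors q0 hq0 p0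
  refine ⟨p, q, fun b hb => ?_⟩
  obtain ⟨pb, qb, hb0, hzb⟩ := h b hb
  have hqb : qb ≠ 0 := by rintro rfl; simp at hb0
  have hd : d ≠ 0 := left_ne_zero_of_mul hq0
  have key : p * qb - pb * q = 0 := by
    refine poly_zero_of_mul (ball_infinite c hr) (mul_ne_zero hq0 hqb) fun z hz hne => ?_
    simp only [eval_mul, mul_ne_zero_iff] at hne
    have e1 := hz0 z hz (by simp [hne])
    have e2 := hzb z hz hne.2
    rw [e1] at e2
    simp only [eval_mul] at e2
    have := hne.1.1
    have := hne.1.2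
    have := hne.2
    field_simp at e2
    simp only [eval_sub, eval_mul]
    linear_combination e2
  have hdvd : q ∣ qb := by
    refine hrel.dvd_of_dvd_mul_left (z := qb) ⟨pb, ?_⟩
    linear_combination key
  have hqb' : q.eval b ≠ 0 := fun h => hb0 (eval_eq_zero_of_dvd_of_eval_eq_zero hdvd h)
  refine ⟨hqb', ?_⟩
  rw [hzb b hb hb0]
  have := congrArg (eval b) key
  simp only [eval_sub, eval_mul, eval_zero] at this
  field_simp
  linear_combination -this

lemma gauss_aux (K : Type) [Field K] [Algebra ℂ[X] K] [IsFractionRing ℂ[X] K] {P Q : ℂ[X][X]} (h : IsRelPrime P Q) (hQ : Q ≠ 0) :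
    ∃ (a b : ℂ[X][X]) (r : ℂ[X]), r ≠ 0 ∧ a * P + b * Q = C r := by
  let : NormalizedGCDMonoid ℂ[X] := Nonempty.some inferInstance
  have hinj := IsFractionRing.injective ℂ[X] K
  have hrel : IsRelPrime (P.map (algebraMap ℂ[X] K)) (Q.map (algebraMap ℂ[X] K)) := by
    intro d hdP hdQ
    have hd0 : d ≠ 0 := by
      rintro rfl
      rw [zero_dvd_iff, Polynomial.map_eq_zero_iff hinj] at hdQ
      exact hQ hdQ
    apply isUnit_or_eq_zero_of_isUnit_integerNormalization_primPart (R := ℂ[X]) hd0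
    obtain ⟨c, c0, hc⟩ := IsLocalization.integerNormalization_spec (nonZeroDivisors ℂ[X]) d
    have hc0 : algebraMap ℂ[X] K c ≠ 0 := by
      rw [Ne, map_eq_zero_iff _ hinj]; exact nonZeroDivisors.ne_zero c0
    have hmd : ((IsLocalization.integerNormalization (nonZeroDivisors ℂ[X]) d).primPart).map
        (algebraMap ℂ[X] K) ∣ d := by
      have h1 : ((IsLocalization.integerNormalization (nonZeroDivisors ℂ[X]) d).primPart).map
        (algebraMap ℂ[X] K) ∣ c • d := by
        rw [← hc]; exact Polynomial.map_dvd _ (primPart_dvd _)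
      rw [Algebra.smul_def, IsScalarTower.algebraMap_apply ℂ[X] K K[X]] at h1
      refine (IsUnit.dvd_mul_left ?_).mp h1
      exact (isUnit_iff_ne_zero.mpr hc0).map _
    apply h
    · exact (isPrimitive_primPart _).dvd_of_fraction_map_dvd_fraction_map (hmd.trans hdP)
    · exact (isPrimitive_primPart _).dvd_of_fraction_map_dvd_fraction_map (hmd.trans hdQ)
  obtain ⟨a, b, hab⟩ := hrel.isCoprime
  obtain ⟨c, c0, hc⟩ := IsLocalization.integerNormalization_spec (nonZeroDivisors ℂ[X]) a
  obtain ⟨d, d0, hd⟩ := IsLocalization.integerNormalization_spec (nonZeroDivisors ℂ[X]) b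
  refine ⟨C d * IsLocalization.integerNormalization (nonZeroDivisors ℂ[X]) a,
    C c * IsLocalization.integerNormalization (nonZeroDivisors ℂ[X]) b, c * d,
    mul_ne_zero (nonZeroDivisors.ne_zero c0) (nonZeroDivisors.ne_zero d0), ?_⟩
  apply Polynomial.map_injective _ hinj
  simp only [Polynomial.map_add, Polynomial.map_mul, hc, hd, map_C, map_mul, Algebra.smul_def,
    IsScalarTower.algebraMap_apply ℂ[X] K K[X], Polynomial.algebraMap_eq]
  linear_combination (C (algebraMap ℂ[X] K c) * C (algebraMap ℂ[X] K d)) * hab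

lemma gauss {P Q : ℂ[X][X]} (h : IsRelPrime P Q) (hQ : Q ≠ 0) :
    ∃ (a b : ℂ[X][X]) (r : ℂ[X]), r ≠ 0 ∧ a * P + b * Q = C r :=
  gauss_aux (FractionRing ℂ[X]) h hQ

lemma bivar_zero {P : ℂ[X][X]} {S T : Set ℂ} (hS : S.Infinite) (hT : T.Infinite)
    (h : ∀ x ∈ S, ∀ y ∈ T, P.evalEval x y = 0) : P = 0 := by
  have h1 : ∀ y ∈ T, P.eval (C y) = 0 := fun y hy =>
    poly_zero_of_infinite hS fun x hx => h x hx y hy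
  apply Polynomial.eq_zero_of_infinite_isRoot P
  refine (hT.image (f := C) (C_injective.injOn)).mono ?_
  rintro _ ⟨y, hy, rfl⟩
  exact h1 y hy

lemma coeff_zero_of_sum {n : ℕ} {c : Fin n → ℂ[X]}
    (h : ∑ i, C (c i) * (X : ℂ[X][X]) ^ (i : ℕ) = 0) (j : Fin n) : c j = 0 := by
  have := congrArg (fun p => coeff p (j : ℕ)) h
  simpa [finsetSum_coeff, coeff_X_pow, Fin.val_inj] using this

lemma sep_rational {c0 c1 : ℂ} {r : ℝ} (hr : 0 < r) (f : ℂ → ℂ → ℂ)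
    (hx : ∀ y ∈ Metric.ball c1 r, ∃ p q : ℂ[X], ∀ x ∈ Metric.ball c0 r,
      q.eval x ≠ 0 ∧ f x y * q.eval x = p.eval x)
    (hy : ∀ x ∈ Metric.ball c0 r, ∃ p q : ℂ[X], ∀ y ∈ Metric.ball c1 r,
      q.eval y ≠ 0 ∧ f x y * q.eval y = p.eval y) :
    ∃ P Q : ℂ[X][X], Q ≠ 0 ∧ ∀ x ∈ Metric.ball c0 r, ∀ y ∈ Metric.ball c1 r,
      f x y * Q.evalEval x y = P.evalEval x y := by
  choose! u v huv using hx
  choose! p q hpq using hy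
  obtain ⟨n, hn⟩ : ∃ n, {x | x ∈ Metric.ball c0 r ∧ (p x).natDegree < n + 1 ∧
      (q x).natDegree < n + 1}.Infinite := by
    by_contra! hcon
    have hc : (⋃ n, {x | x ∈ Metric.ball c0 r ∧ (p x).natDegree < n + 1 ∧
      (q x).natDegree < n + 1}).Countable :=
      Set.countable_iUnion fun n => (hcon n).countable
    obtain ⟨x, hx1, hx2⟩ := (hc.dense_compl ℂ).exists_mem_open Metric.isOpen_ball
      ⟨c0, Metric.mem_ball_self hr⟩
    apply hx1
    simp only [Set.mem_iUnion]
    exact ⟨(p x).natDegree + (q x).natDegree, hx2, by omega, by omega⟩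
  let w : Metric.ball c1 r → (Fin (n+1) ⊕ Fin (n+1)) → ℂ[X] := fun y =>
    Sum.elim (fun i => v y * C ((y : ℂ) ^ (i : ℕ))) (fun i => u y * C ((y : ℂ) ^ (i : ℕ)))
  obtain ⟨c, hc0, hc⟩ := exists_relation w (by
    intro s
    apply poly_zero_of_infinite hn
    rintro x ⟨hx, hpx, hqx⟩
    have h5 := RingHom.map_det (evalRingHom x) (Matrix.of (fun i => w (s i)))
    rw [coe_evalRingHom] at h5
    rw [h5, ← Matrix.exists_mulVec_eq_zero_iff]
    refine ⟨Sum.elim (fun i => (p x).coeff i) (fun i => - (q x).coeff i), ?_, ?_⟩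
    · intro h0
      have h1 := (hpq x hx c1 (Metric.mem_ball_self hr)).1
      apply h1
      rw [eval_eq_sum_range' hqx, Finset.sum_range]
      refine Finset.sum_eq_zero fun i _ => ?_
      have := congrFun h0 (Sum.inr i)
      simp only [Sum.elim_inr, Pi.zero_apply, neg_eq_zero] at this
      rw [this, zero_mul]
    · ext j
      have hy := (s j).2
      obtain ⟨h1, h2⟩ := hpq x hx _ hy
      obtain ⟨h3, h4⟩ := huv _ hy x hx
      have e1 := eval_eq_sum_range' hqx ((s j : ℂ))
      have e2 := eval_eq_sum_range' hpx ((s j : ℂ))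
      rw [Finset.sum_range] at e1 e2
      simp only [Matrix.mulVec, dotProduct, Fintype.sum_sum_type, RingHom.mapMatrix_apply,
        Matrix.map_apply, Matrix.of_apply, w, Sum.elim_inl, Sum.elim_inr, coe_evalRingHom,
        eval_mul, eval_C, Pi.zero_apply]
      have e3 : ∑ i : Fin (n+1), eval x (v (s j)) * (s j : ℂ) ^ (i:ℕ) * (p x).coeff i
          = eval x (v (s j)) * eval (s j : ℂ) (p x) := by
        rw [e2, Finset.mul_sum]; exact Finset.sum_congr rfl fun i _ => by ring
      have e4 : ∑ i : Fin (n+1), eval x (u (s j)) * (s j : ℂ) ^ (i:ℕ) * -(q x).coeff i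
          = - (eval x (u (s j)) * eval (s j : ℂ) (q x)) := by
        rw [e1, Finset.mul_sum, ← Finset.sum_neg_distrib]
        exact Finset.sum_congr rfl fun i _ => by ring
      rw [e3, e4, ← h2, ← h4]; ring)
  have key : ∀ x ∈ Metric.ball c0 r, ∀ y ∈ Metric.ball c1 r,
      f x y * (∑ i : Fin (n+1), C (c (Sum.inr i)) * (X : ℂ[X][X]) ^ (i : ℕ)).evalEval x y =
      (-∑ i : Fin (n+1), C (c (Sum.inl i)) * (X : ℂ[X][X]) ^ (i : ℕ)).evalEval x y := by
    intro x hx y hy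
    obtain ⟨h3, h4⟩ := huv _ hy x hx
    have h1 := congrArg (eval x) (hc ⟨y, hy⟩)
    simp only [w, Fintype.sum_sum_type, Sum.elim_inl, Sum.elim_inr, eval_add, eval_finsetSum,
      eval_mul, eval_C, eval_zero] at h1
    simp only [evalEval_finsetSum, evalEval_mul, evalEval_C, evalEval_pow, evalEval_X,
      evalEval_neg]
    apply mul_left_cancel₀ h3
    have e1 : ∑ i : Fin (n+1), eval x (c (Sum.inl i)) * (eval x (v y) * y ^ (i:ℕ)) =
      eval x (v y) * ∑ i : Fin (n+1), eval x (c (Sum.inl i)) * y ^ (i:ℕ) := by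
      rw [Finset.mul_sum]; exact Finset.sum_congr rfl fun i _ => by ring
    have e2 : ∑ i : Fin (n+1), eval x (c (Sum.inr i)) * (eval x (u y) * y ^ (i:ℕ)) =
      eval x (u y) * ∑ i : Fin (n+1), eval x (c (Sum.inr i)) * y ^ (i:ℕ) := by
      rw [Finset.mul_sum]; exact Finset.sum_congr rfl fun i _ => by ring
    rw [e1, e2, ← h4] at h1
    linear_combination h1
  refine ⟨_, _, ?_, key⟩
  intro hQ
  apply hc0
  have hP := bivar_zero (ball_infinite c0 hr) (ball_infinite c1 hr) (fun x hx y hy => by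
    rw [← key x hx y hy, hQ, evalEval_zero, mul_zero])
  rw [neg_eq_zero] at hP
  ext1 j
  rcases j with j | j
  · exact coeff_zero_of_sum hP j
  · exact coeff_zero_of_sum hQ j

lemma eval_evalRingHom_map (P : ℂ[X][X]) (x y : ℂ) :
    (P.map (evalRingHom x)).eval y = P.evalEval x y := by
  rw [eval_map, eval₂_evalRingHom]

lemma sep_rational_reduced {c0 c1 : ℂ} {r : ℝ} (hr : 0 < r) (f : ℂ → ℂ → ℂ)
    (hx : ∀ y ∈ Metric.ball c1 r, ∃ p q : ℂ[X], ∀ x ∈ Metric.ball c0 r,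
      q.eval x ≠ 0 ∧ f x y * q.eval x = p.eval x)
    (hy : ∀ x ∈ Metric.ball c0 r, ∃ p q : ℂ[X], ∀ y ∈ Metric.ball c1 r,
      q.eval y ≠ 0 ∧ f x y * q.eval y = p.eval y) :
    ∃ P Q : ℂ[X][X], Q ≠ 0 ∧ IsRelPrime P Q ∧ ∀ x ∈ Metric.ball c0 r, ∀ y ∈ Metric.ball c1 r,
      f x y * Q.evalEval x y = P.evalEval x y := by
  obtain ⟨P0, Q0, hQ0, h0⟩ := sep_rational hr f hx hy
  obtain ⟨Q, P, D, hrel, rfl, rfl⟩ := UniqueFactorizationMonoid.exists_reduced_factors Q0 hQ0 P0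
  have hD := left_ne_zero_of_mul hQ0
  have hQ := right_ne_zero_of_mul hQ0
  refine ⟨P, Q, hQ, hrel.symm, ?_⟩
  -- the set of good y
  have hfin : (Metric.ball c1 r ∩ {y | D.eval (C y) ≠ 0}).Infinite := by
    have hf : {y : ℂ | D.IsRoot (C y)}.Finite :=
      (Polynomial.finite_setOfPred_isRoot hD).preimage (C_injective.injOn)
    refine ((ball_infinite c1 hr).sdiff hf).mono ?_
    rintro z ⟨h1, h2⟩
    exact ⟨h1, h2⟩
  have step1 : ∀ y ∈ Metric.ball c1 r ∩ {y | D.eval (C y) ≠ 0}, ∀ x ∈ Metric.ball c0 r,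
      f x y * Q.evalEval x y = P.evalEval x y := by
    rintro y ⟨hyb, hyD⟩ x hxb
    obtain ⟨p, q, hpq⟩ := hx y hyb
    have : p * Q.eval (C y) - q * P.eval (C y) = 0 := by
      refine poly_zero_of_mul (ball_infinite c0 hr) hyD fun z hz hne => ?_
      have h1 := h0 z hz y hyb
      rw [evalEval_mul, evalEval_mul] at h1
      have h2 : f z y * Q.evalEval z y = P.evalEval z y := by
        apply mul_left_cancel₀ hne
        change D.evalEval z y * _ = D.evalEval z y * _
        linear_combination h1
      simp only [eval_sub, eval_mul]
      rw [← (hpq z hz).2]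
      linear_combination (eval z q) * h2
    have h3 := congrArg (eval x) this
    simp only [eval_sub, eval_mul, eval_zero] at h3
    rw [← (hpq x hxb).2] at h3
    apply mul_left_cancel₀ (hpq x hxb).1
    linear_combination h3
  intro x hxb y hyb
  obtain ⟨p, q, hpq⟩ := hy x hxb
  have : p * Q.map (evalRingHom x) - q * P.map (evalRingHom x) = 0 := by
    refine poly_zero_of_infinite hfin fun z hz => ?_
    have h2 := step1 z hz x hxb
    simp only [eval_sub, eval_mul, eval_evalRingHom_map]
    rw [← (hpq z hz.1).2]
    linear_combination (eval z q) * h2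
  have h3 := congrArg (eval y) this
  simp only [eval_sub, eval_mul, eval_zero, eval_evalRingHom_map] at h3
  rw [← (hpq y hyb).2] at h3
  apply mul_left_cancel₀ (hpq y hyb).1
  linear_combination h3

lemma C_dvd_of_map_zero {P : ℂ[X][X]} {x : ℂ} (h : P.map (evalRingHom x) = 0) :
    C (X - C x) ∣ P := by
  rw [C_dvd_iff_dvd_coeff]
  intro i
  rw [dvd_iff_isRoot]
  have := congrArg (fun p => coeff p i) h
  simpa using this

lemma continuous_evalEval (Q : ℂ[X][X]) : Continuous fun z : ℂ × ℂ => Q.evalEval z.1 z.2 := by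
  have : (fun z : ℂ × ℂ => Q.evalEval z.1 z.2) =
      fun z : ℂ × ℂ => ∑ i ∈ Finset.range (Q.natDegree + 1), (Q.coeff i).eval z.1 * z.2 ^ i := by
    ext z
    rw [evalEval, eval_eq_sum_range (p := Q), eval_finsetSum]
    simp
  rw [this]
  fun_prop

open Filter Topology in
lemma nonvanishing {c0 c1 : ℂ} {r : ℝ} (f : ℂ → ℂ → ℂ)
    {P Q : ℂ[X][X]} (hQ0 : Q ≠ 0) (hrel : IsRelPrime P Q)
    (h : ∀ x ∈ Metric.ball c0 r, ∀ y ∈ Metric.ball c1 r,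
      f x y * Q.evalEval x y = P.evalEval x y) :
    ∀ x ∈ Metric.ball c0 r, ∀ y ∈ Metric.ball c1 r, Q.evalEval x y ≠ 0 := by
  intro x0 hx0 y0 hy0 hzero
  have hr : 0 < r := Metric.pos_of_mem_ball hx0
  obtain ⟨a, b, s, hs, hab⟩ := gauss hrel hQ0
  have hgood : ∀ x ∈ Metric.ball c0 r, s.eval x ≠ 0 → ∀ y ∈ Metric.ball c1 r,
      Q.evalEval x y ≠ 0 := by
    intro x hx hsx y hy hz
    have h1 := h x hx y hy
    have h2 := congrArg (evalEval x y) hab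
    rw [hz, mul_zero] at h1
    rw [evalEval_add, evalEval_mul, evalEval_mul, evalEval_C, hz, ← h1] at h2
    exact hsx (by rw [← h2]; ring)
  have hQx : Q.map (evalRingHom x0) ≠ 0 := by
    intro hz
    have hzP : P.map (evalRingHom x0) = 0 := by
      refine poly_zero_of_infinite (ball_infinite c1 hr) fun y hy => ?_
      rw [eval_evalRingHom_map, ← h x0 hx0 y hy, ← eval_evalRingHom_map, hz, eval_zero, mul_zero]
    have hu := hrel (C_dvd_of_map_zero hzP) (C_dvd_of_map_zero hz)
    rw [isUnit_C] at hu
    exact not_isUnit_X_sub_C x0 hu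
  -- choose ε
  have hev : ∀ᶠ y in 𝓝[≠] y0, Q.evalEval x0 y ≠ 0 := by
    have hf : {y | (Q.map (evalRingHom x0)).IsRoot y}.Finite :=
      Polynomial.finite_setOfPred_isRoot hQx
    have := hf.subset (Set.sdiff_subset (t := {y0}))
    have h2 := this.isClosed.isOpen_compl.mem_nhds (x := y0) (by simp)
    rw [eventually_nhdsWithin_iff]
    filter_upwards [h2] with y hy hne hz
    apply hy
    refine ⟨?_, hne⟩
    change eval y _ = 0
    rw [eval_evalRingHom_map, hz]
  rw [eventually_nhdsWithin_iff, Metric.eventually_nhds_iff_ball] at hev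
  obtain ⟨e1, he1, hev⟩ := hev
  obtain ⟨e2, he2, hsub⟩ := Metric.isOpen_ball.mem_nhds hy0 |> Metric.mem_nhds_iff.mp
  obtain ⟨e, he, hel⟩ := exists_between (lt_min he1 he2)
  have hcb : Metric.closedBall y0 e ⊆ Metric.ball c1 r :=
    (Metric.closedBall_subset_ball (hel.trans_le (min_le_right _ _))).trans hsub
  have hsph : ∀ y ∈ Metric.sphere y0 e, Q.evalEval x0 y ≠ 0 := by
    intro y hy
    refine hev y ?_ ?_
    · rw [Metric.mem_sphere] at hy
      rw [Metric.mem_ball, hy]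
      exact hel.trans_le (min_le_left _ _)
    · rintro rfl
      simp at hy
      exact he.ne hy
  have hcont := continuous_evalEval Q
  have hcy : ∀ x, Continuous fun y => Q.evalEval x y := fun x =>
    hcont.comp (by fun_prop : Continuous fun y : ℂ => (x, y))
  obtain ⟨m, hm, hmin⟩ : ∃ m > 0, ∀ y ∈ Metric.sphere y0 e, m < ‖Q.evalEval x0 y‖ := by
    obtain ⟨y1, hy1, hmin⟩ := (isCompact_sphere y0 e).exists_isMinOn
      (NormedSpace.sphere_nonempty.mpr he.le) (hcy x0).norm.continuousOn
    have h1 := norm_pos_iff.mpr (hsph y1 hy1)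
    refine ⟨_, half_pos h1, fun y hy => ?_⟩
    exact (half_lt_self h1).trans_le (hmin hy)
  have hnear : ∀ᶠ x in 𝓝 x0, ∀ y ∈ Metric.sphere y0 e, m < ‖Q.evalEval x y‖ := by
    refine (isCompact_sphere y0 e).eventually_forall_of_forall_eventually fun y hy => ?_
    have := (hcont.norm.tendsto (x0, y)).eventually (lt_mem_nhds (hmin y hy))
    exact this
  have hsne : ∀ᶠ x in 𝓝[≠] x0, s.eval x ≠ 0 := by
    have hf : {y | s.IsRoot y}.Finite := Polynomial.finite_setOfPred_isRoot hs
    have := hf.subset (Set.sdiff_subset (t := {x0}))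
    have h2 := this.isClosed.isOpen_compl.mem_nhds (x := x0) (by simp)
    rw [eventually_nhdsWithin_iff]
    filter_upwards [h2] with y hy hne hz
    exact hy ⟨hz, hne⟩
  have hbound : ∀ᶠ x in 𝓝[≠] x0, m ≤ ‖Q.evalEval x y0‖ := by
    filter_upwards [hsne, hnear.filter_mono nhdsWithin_le_nhds,
      (Metric.isOpen_ball.mem_nhds hx0 : _ ∈ 𝓝 x0) |> mem_nhdsWithin_of_mem_nhds] with x h1 h2 h3
    have hnz : ∀ y ∈ Metric.closedBall y0 e, Q.evalEval x y ≠ 0 := fun y hy =>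
      hgood x h3 h1 y (hcb hy)
    have hd : DiffContOnCl ℂ (fun y => (Q.evalEval x y)⁻¹) (Metric.ball y0 e) := by
      refine DifferentiableOn.diffContOnCl ?_
      rw [closure_ball y0 he.ne']
      refine DifferentiableOn.inv ?_ hnz
      have : (fun y => Q.evalEval x y) = fun y => (Q.map (evalRingHom x)).eval y := by
        ext y; rw [eval_evalRingHom_map]
      rw [this]
      exact (Polynomial.differentiable _).differentiableOn
    have h5 := Complex.norm_le_of_forall_mem_frontier_norm_le Metric.isBounded_ball hd
      (C := m⁻¹) (fun y hy => by
        rw [frontier_ball y0 he.ne'] at hy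
        rw [norm_inv]
        exact inv_anti₀ hm (h2 y hy).le) (subset_closure (Metric.mem_ball_self he))
    rw [norm_inv] at h5
    exact (inv_le_inv₀ (norm_pos_iff.mpr (hnz y0 (Metric.mem_closedBall_self he.le))) hm).mp h5
  have hlim : Tendsto (fun x => ‖Q.evalEval x y0‖) (𝓝[≠] x0) (𝓝 ‖Q.evalEval x0 y0‖) := by
    have : Continuous fun x => ‖Q.evalEval x y0‖ :=
      (hcont.comp (by fun_prop : Continuous fun x : ℂ => (x, y0))).norm
    exact (this.tendsto x0).mono_left nhdsWithin_le_nhds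
  have := ge_of_tendsto hlim hbound
  rw [hzero, norm_zero] at this
  linarith

lemma irreducible_X_sub_C_two (i : Fin 2) (y : ℂ) :
    Irreducible (MvPolynomial.X i - MvPolynomial.C y : MvPolynomial (Fin 2) ℂ) := by
  have hc : MvPolynomial.coeff (Finsupp.single i 1)
      (MvPolynomial.X i - MvPolynomial.C y : MvPolynomial (Fin 2) ℂ) = 1 := by
    have h0 : (0 : Fin 2 →₀ ℕ) ≠ Finsupp.single i 1 := by
      intro h
      simpa using (Finsupp.single_eq_zero.mp h.symm)
    simp [MvPolynomial.coeff_X', MvPolynomial.coeff_C, h0]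
  apply MvPolynomial.irreducible_of_totalDegree_eq_one
  · apply le_antisymm
    · refine (MvPolynomial.totalDegree_sub_C_le _ _).trans ?_
      simp
    · have := MvPolynomial.le_totalDegree (p :=
        (MvPolynomial.X i - MvPolynomial.C y : MvPolynomial (Fin 2) ℂ))
        (s := Finsupp.single i 1) (by rw [MvPolynomial.mem_support_iff, hc]; exact one_ne_zero)
      simpa using this
  · intro x hx
    have := hx (Finsupp.single i 1)
    rw [hc] at this
    exact isUnit_of_dvd_one this

lemma line_smooth {i j : Fin 2} (hij : i ≠ j) (y c : ℂ) {r : ℝ} (hr : 0 < r) :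
    IsSmoothComplexArc (MvPolynomial.X i - MvPolynomial.C y)
      {z | z i = y ∧ z j ∈ Metric.ball c r} := by
  refine ⟨?_, ?_, ?_⟩
  · rintro v ⟨hv, -⟩
    refine ⟨by simp [hv], ?_⟩
    fin_cases i
    · left; simp
    · right; simp
  · refine ⟨{z | z j ∈ Metric.ball c r},
      Metric.isOpen_ball.preimage (continuous_apply j), ?_⟩
    ext z
    simp only [complexZeroSet, Set.mem_ofPred_eq, Set.mem_inter_iff, map_sub, MvPolynomial.eval_X,
      MvPolynomial.eval_C, sub_eq_zero]
    tauto
  · have hrc : (r : ℂ) ≠ 0 := by exact_mod_cast hr.ne'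
    have hL : ∀ t : ℂ, (fun k => if k = j then t else y : Fin 2 → ℂ) j = t := by simp
    refine ⟨⟨⟨fun z => ⟨(z.1 j - c) / r, ?_⟩,
      fun w => ⟨fun k => if k = j then c + r * w else y, ?_⟩, ?_, ?_⟩, ?_, ?_⟩⟩
    · have := z.2.2
      rw [Metric.mem_ball, dist_eq_norm] at this
      rw [mem_ball_zero_iff, norm_div, Complex.norm_real, Real.norm_of_nonneg hr.le, div_lt_one hr]
      exact this
    · refine ⟨by simp [hij], ?_⟩
      have := mem_ball_zero_iff.mp w.2
      simp only [if_true, Metric.mem_ball, dist_eq_norm, add_sub_cancel_left, norm_mul,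
        Complex.norm_real, Real.norm_of_nonneg hr.le]
      nlinarith
    · rintro ⟨z, hz1, hz2⟩
      ext k
      by_cases hk : k = j
      · subst hk
        simp only [if_true]
        field_simp
        ring
      · have : k = i := by omega
        subst this
        simp [hk, hz1]
    · rintro ⟨w, hw⟩
      ext
      simp only [if_true]
      field_simp
      ring
    · refine Continuous.subtype_mk ?_ _
      exact (((continuous_apply j).comp continuous_subtype_val).sub continuous_const).div_const _
    · refine Continuous.subtype_mk ?_ _
      refine continuous_pi fun k => ?_
      by_cases hk : k = j
      · simp only [hk, if_true]; fun_prop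
      · simp only [hk, if_false]; fun_prop

lemma line_rational {U : Set (Fin 2 → ℂ)} {f : (Fin 2 → ℂ) → ℂ}
    (harc : ∀ P : MvPolynomial (Fin 2) ℂ, Irreducible P →
      ∀ A : Set (Fin 2 → ℂ), IsSmoothComplexArc P A → A ⊆ U →
        ∀ a ∈ A, ∃ p q : MvPolynomial (Fin 2) ℂ, MvPolynomial.eval a q ≠ 0 ∧
          ∀ z ∈ A, MvPolynomial.eval z q ≠ 0 →
            f z = MvPolynomial.eval z p / MvPolynomial.eval z q)
    {i j : Fin 2} (hij : i ≠ j) (y c : ℂ) {r : ℝ} (hr : 0 < r)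
    (hU : {z | z i = y ∧ z j ∈ Metric.ball c r} ⊆ U) :
    ∃ p q : ℂ[X], ∀ t ∈ Metric.ball c r, q.eval t ≠ 0 ∧
      f (fun k => if k = j then t else y) * q.eval t = p.eval t := by
  refine one_var hr (fun t => f (fun k => if k = j then t else y)) fun a ha => ?_
  have hmem : ∀ t ∈ Metric.ball c r, (fun k => if k = j then t else y : Fin 2 → ℂ) ∈
      {z : Fin 2 → ℂ | z i = y ∧ z j ∈ Metric.ball c r} := by
    intro t ht
    simpa [hij] using ht
  obtain ⟨p, q, h1, h2⟩ := harc _ (irreducible_X_sub_C_two i y) _ (line_smooth hij y c hr) hU _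
    (hmem a ha)
  have hev : ∀ (p : MvPolynomial (Fin 2) ℂ) (t : ℂ),
      (MvPolynomial.aeval (fun k => if k = j then (X : ℂ[X]) else C y) p).eval t =
        MvPolynomial.eval (fun k => if k = j then t else y) p := by
    intro p t
    induction p using MvPolynomial.induction_on with
    | C a => simp
    | add p q hp hq => simp [hp, hq]
    | mul_X p n hp =>
      simp only [map_mul, eval_mul, hp, MvPolynomial.aeval_X, MvPolynomial.eval_X]
      split_ifs <;> simp
  refine ⟨MvPolynomial.aeval (fun k => if k = j then (X : ℂ[X]) else C y) p,
    MvPolynomial.aeval (fun k => if k = j then (X : ℂ[X]) else C y) q, ?_, ?_⟩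
  · rw [hev]; exact h1
  · intro z hz hne
    rw [hev] at hne
    rw [hev, hev]
    exact h2 _ (hmem z hz) hne

lemma eval_equivMv (P : ℂ[X][X]) (z : Fin 2 → ℂ) :
    MvPolynomial.eval z (Bivariate.equivMvPolynomial ℂ P) = P.evalEval (z 0) (z 1) := by
  have : (MvPolynomial.aeval z : MvPolynomial (Fin 2) ℂ →ₐ[ℂ] ℂ).comp
      (Bivariate.equivMvPolynomial ℂ).toAlgHom = aevalAeval (z 0) (z 1) := by
    ext <;> simp
  have h2 := DFunLike.congr_fun this P
  rw [coe_aevalAeval_eq_evalEval] at h2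
  rw [← h2]
  simp [MvPolynomial.aeval_eq_eval]

lemma local_rational {U : Set (Fin 2 → ℂ)} {f : (Fin 2 → ℂ) → ℂ}
    (harc : ∀ P : MvPolynomial (Fin 2) ℂ, Irreducible P →
      ∀ A : Set (Fin 2 → ℂ), IsSmoothComplexArc P A → A ⊆ U →
        ∀ a ∈ A, ∃ p q : MvPolynomial (Fin 2) ℂ, MvPolynomial.eval a q ≠ 0 ∧
          ∀ z ∈ A, MvPolynomial.eval z q ≠ 0 →
            f z = MvPolynomial.eval z p / MvPolynomial.eval z q)
    (c : Fin 2 → ℂ) {r : ℝ} (hr : 0 < r) (hU : Metric.ball c r ⊆ U) :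
    ∃ P Q : ℂ[X][X], IsRelPrime P Q ∧ ∀ z ∈ Metric.ball c r, Q.evalEval (z 0) (z 1) ≠ 0 ∧
      f z * Q.evalEval (z 0) (z 1) = P.evalEval (z 0) (z 1) := by
  have hball : ∀ z : Fin 2 → ℂ, z ∈ Metric.ball c r ↔
      z 0 ∈ Metric.ball (c 0) r ∧ z 1 ∈ Metric.ball (c 1) r := by
    intro z
    simp only [Metric.mem_ball, dist_pi_lt_iff hr, Fin.forall_fin_two]
  have e0 : ∀ x y : ℂ, (fun k => if k = 0 then x else y : Fin 2 → ℂ) = ![x, y] := by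
    intro x y; ext k; fin_cases k <;> simp
  have e1 : ∀ x y : ℂ, (fun k => if k = 1 then y else x : Fin 2 → ℂ) = ![x, y] := by
    intro x y; ext k; fin_cases k <;> simp
  have hx : ∀ y ∈ Metric.ball (c 1) r, ∃ p q : ℂ[X], ∀ x ∈ Metric.ball (c 0) r,
      q.eval x ≠ 0 ∧ f ![x, y] * q.eval x = p.eval x := by
    intro y hy
    have := line_rational harc (i := 1) (j := 0) (by decide) y (c 0) hr (by
      rintro z ⟨h1, h2⟩
      exact hU ((hball z).mpr ⟨h2, by rw [h1]; exact hy⟩))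
    simpa only [e0] using this
  have hy : ∀ x ∈ Metric.ball (c 0) r, ∃ p q : ℂ[X], ∀ y ∈ Metric.ball (c 1) r,
      q.eval y ≠ 0 ∧ f ![x, y] * q.eval y = p.eval y := by
    intro x hx
    have := line_rational harc (i := 0) (j := 1) (by decide) x (c 1) hr (by
      rintro z ⟨h1, h2⟩
      exact hU ((hball z).mpr ⟨by rw [h1]; exact hx, h2⟩))
    simpa only [e1] using this
  obtain ⟨P, Q, hQ, hrel, h⟩ := sep_rational_reduced hr (fun x y => f ![x, y]) hx hy
  refine ⟨P, Q, hrel, fun z hz => ?_⟩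
  obtain ⟨h0, h1⟩ := (hball z).mp hz
  refine ⟨nonvanishing _ hQ hrel h _ h0 _ h1, ?_⟩
  have h2 := h _ h0 _ h1
  have : ![z 0, z 1] = z := by ext k; fin_cases k <;> simp
  simpa only [this] using h2

lemma open_zero {P : ℂ[X][X]} {O : Set (Fin 2 → ℂ)} (hO : IsOpen O) (hne : O.Nonempty)
    (h : ∀ z ∈ O, P.evalEval (z 0) (z 1) = 0) : P = 0 := by
  obtain ⟨c, hc⟩ := hne
  obtain ⟨r, hr, hsub⟩ := Metric.isOpen_iff.mp hO c hc
  refine bivar_zero (ball_infinite (c 0) hr) (ball_infinite (c 1) hr) fun x hx y hy => ?_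
  have := h ![x, y] (hsub (by
    rw [Metric.mem_ball, dist_pi_lt_iff hr, Fin.forall_fin_two]
    exact ⟨hx, hy⟩))
  simpa using this

lemma global_rational {U : Set (Fin 2 → ℂ)} (hU : IsOpen U) (hconn : IsConnected U)
    {f : (Fin 2 → ℂ) → ℂ}
    (harc : ∀ P : MvPolynomial (Fin 2) ℂ, Irreducible P →
      ∀ A : Set (Fin 2 → ℂ), IsSmoothComplexArc P A → A ⊆ U →
        ∀ a ∈ A, ∃ p q : MvPolynomial (Fin 2) ℂ, MvPolynomial.eval a q ≠ 0 ∧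
          ∀ z ∈ A, MvPolynomial.eval z q ≠ 0 →
            f z = MvPolynomial.eval z p / MvPolynomial.eval z q) :
    ∃ P Q : ℂ[X][X], ∀ z ∈ U, Q.evalEval (z 0) (z 1) ≠ 0 ∧
      f z * Q.evalEval (z 0) (z 1) = P.evalEval (z 0) (z 1) := by
  have hloc : ∀ z ∈ U, ∃ r > 0, Metric.ball z r ⊆ U ∧ ∃ P Q : ℂ[X][X], IsRelPrime P Q ∧
      ∀ w ∈ Metric.ball z r, Q.evalEval (w 0) (w 1) ≠ 0 ∧
      f w * Q.evalEval (w 0) (w 1) = P.evalEval (w 0) (w 1) := by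
    intro z hz
    obtain ⟨r, hr, hsub⟩ := Metric.isOpen_iff.mp hU z hz
    exact ⟨r, hr, hsub, local_rational harc z hr hsub⟩
  choose! r hr hsub P Q hrel hPQ using hloc
  obtain ⟨z0, hz0⟩ := hconn.nonempty
  have hQ0 : ∀ z ∈ U, Q z ≠ 0 := by
    intro z hz h0
    have := (hPQ z hz z (Metric.mem_ball_self (hr z hz))).1
    rw [h0, evalEval_zero] at this
    exact this rfl
  -- compatibility
  have hcomp : ∀ z ∈ U, ∀ w ∈ Metric.ball z (r z), P w * Q z = P z * Q w := by
    intro z hz w hw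
    have hwU := hsub z hz hw
    rw [← sub_eq_zero]
    refine open_zero (O := Metric.ball z (r z) ∩ Metric.ball w (r w))
      (Metric.isOpen_ball.inter Metric.isOpen_ball) ⟨w, hw, Metric.mem_ball_self (hr w hwU)⟩ ?_
    rintro v ⟨hv1, hv2⟩
    have h1 := (hPQ z hz v hv1).2
    have h2 := (hPQ w hwU v hv2).2
    rw [evalEval_sub, evalEval_mul, evalEval_mul, ← h1, ← h2]
    ring
  have hiff : ∀ z ∈ U, ∀ w ∈ Metric.ball z (r z),
      (P z0 * Q z = P z * Q z0 ↔ P z0 * Q w = P w * Q z0) := by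
    intro z hz w hw
    have hc := hcomp z hz w hw
    have hwU := hsub z hz hw
    constructor
    · intro h
      apply mul_left_cancel₀ (hQ0 z hz)
      linear_combination (Q w) * h - (Q z0) * hc
    · intro h
      apply mul_left_cancel₀ (hQ0 w hwU)
      linear_combination (Q z) * h + (Q z0) * hc
  have hall : ∀ z ∈ U, P z0 * Q z = P z * Q z0 := by
    let S := {z | z ∈ U ∧ P z0 * Q z = P z * Q z0}
    let T := {z | z ∈ U ∧ ¬ P z0 * Q z = P z * Q z0}
    have hS : IsOpen S := Metric.isOpen_iff.mpr fun z hz => ⟨r z, hr z hz.1, fun w hw =>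
      ⟨hsub z hz.1 hw, (hiff z hz.1 w hw).mp hz.2⟩⟩
    have hT : IsOpen T := Metric.isOpen_iff.mpr fun z hz => ⟨r z, hr z hz.1, fun w hw =>
      ⟨hsub z hz.1 hw, fun h => hz.2 ((hiff z hz.1 w hw).mpr h)⟩⟩
    intro z hz
    by_contra hcon
    obtain ⟨v, -, hv1, hv2⟩ := hconn.isPreconnected S T hS hT
      (fun v hv => by
        by_cases h : P z0 * Q v = P v * Q z0
        · exact Or.inl ⟨hv, h⟩
        · exact Or.inr ⟨hv, h⟩)
      ⟨z0, hz0, hz0, rfl⟩ ⟨z, hz, hz, hcon⟩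
    exact hv2.2 hv1.2
  refine ⟨P z0, Q z0, fun z hz => ?_⟩
  obtain ⟨h1, h2⟩ := hPQ z hz z (Metric.mem_ball_self (hr z hz))
  have hz' := hall z hz
  have hdvd : Q z0 ∣ Q z := by
    refine (hrel z0 hz0).symm.dvd_of_dvd_mul_left (z := Q z) ⟨P z, ?_⟩
    linear_combination hz'
  refine ⟨?_, ?_⟩
  · intro h0
    have := evalEval_dvd (z 0) (z 1) hdvd
    rw [h0, zero_dvd_iff] at this
    exact h1 this
  · have h3 := congrArg (evalEval (z 0) (z 1)) hz'
    rw [evalEval_mul, evalEval_mul, ← h2] at h3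
    apply mul_left_cancel₀ h1
    linear_combination -h3

end ArcHelpers

open MvPolynomial

/-- **Theorem 9.1** for domains in `ℂ²`. If `f : U → ℂ`, defined on a nonempty connected
open set `U ⊆ ℂ²`, is regular on every smooth algebraic arc contained in `U`, then `f`
is regular on `U`. -/
theorem regular_of_regular_on_smooth_arcs_complex_plane
    (U : Set (Fin 2 → ℂ)) (hU : IsOpen U) (hne : U.Nonempty) (hconn : IsConnected U)
    (f : (Fin 2 → ℂ) → ℂ)
    (harc : ∀ P : MvPolynomial (Fin 2) ℂ, Irreducible P →
      ∀ A : Set (Fin 2 → ℂ), IsSmoothComplexArc P A → A ⊆ U →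
        ∀ a ∈ A, ∃ p q : MvPolynomial (Fin 2) ℂ, eval a q ≠ 0 ∧
          ∀ z ∈ A, eval z q ≠ 0 → f z = eval z p / eval z q) :
    ∀ x ∈ U, ∃ p q : MvPolynomial (Fin 2) ℂ, eval x q ≠ 0 ∧
      ∀ y ∈ U, eval y q ≠ 0 → f y = eval y p / eval y q := by
  obtain ⟨P, Q, h⟩ := ArcHelpers.global_rational hU hconn harc
  intro x hx
  refine ⟨Polynomial.Bivariate.equivMvPolynomial ℂ P,
    Polynomial.Bivariate.equivMvPolynomial ℂ Q, ?_, ?_⟩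
  · rw [ArcHelpers.eval_equivMv]
    exact (h x hx).1
  · intro y hy _
    rw [ArcHelpers.eval_equivMv, ArcHelpers.eval_equivMv]
    exact eq_div_of_mul_eq (h y hy).1 (h y hy).2
end
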